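/- Let f be C²-smooth on an open neighbourhood of S^{n-1} with ∫ f dσ_{n-1} = 0 and ‖f''(θ)‖ ≤ 1 (operator norm of the Euclidean Hessian) for every θ ∈ S^{n-1}. Then log ∫ exp{ ((n−1)/2) f } dσ_{n-1} ≤ ((n−1)/2) ∫ |∇f|² dσ_{n-1}, where ∇f is the Euclidean gradient. -/

import Mathlib

open MeasureTheory Metric Filter
open scoped RealInnerProductSpace ENNReal NNReal

noncomputable section

namespace SecondOrderConc

/-- Euclidean space ℝⁿ. -/
abbrev E (n : ℕ) : Type := EuclideanSpace ℝ (Fin n)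

/-- The uniform (normalized rotation-invariant) probability measure `σ_{n-1}`
on the unit sphere `S^{n-1}`, viewed as a measure on the ambient space ℝⁿ. -/
def sphMeasure (n : ℕ) : Measure (E n) :=
  ((((volume : Measure (E n)).toSphere).map Subtype.val) Set.univ)⁻¹ •
    (((volume : Measure (E n)).toSphere).map Subtype.val)

variable {n : ℕ}

/-- Euclidean Hessian of `f` at `x`, as a continuous linear operator on ℝⁿ. -/
def hess (f : E n → ℝ) (x : E n) : E n →L[ℝ] E n :=
  fderiv ℝ (gradient f) x

/-- Squared Hilbert–Schmidt norm of an operator on ℝⁿ. -/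
def hsNormSq (A : E n →L[ℝ] E n) : ℝ :=
  ∑ i : Fin n, ‖A (EuclideanSpace.single i 1)‖ ^ 2

/-- Orthogonal projection of ℝⁿ onto `θ^⊥` (for a unit vector `θ`). -/
def projPerp (θ : E n) : E n →L[ℝ] E n :=
  ContinuousLinearMap.id ℝ (E n) - (innerSL ℝ θ).smulRight θ

/-- Spherical gradient `∇_S f(θ) = ∇f(θ) − ⟨∇f(θ),θ⟩θ`. -/
def sgrad (f : E n → ℝ) (θ : E n) : E n :=
  gradient f θ - ⟪gradient f θ, θ⟫ • θ

/-- Spherical Hessian `f''_S(θ) = P_{θ^⊥} (f''(θ) − ⟨∇f(θ),θ⟩ I_n) P_{θ^⊥}`. -/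
def sHess (f : E n → ℝ) (θ : E n) : E n →L[ℝ] E n :=
  (projPerp θ).comp
    ((hess f θ - ⟪gradient f θ, θ⟫ • ContinuousLinearMap.id ℝ (E n)).comp (projPerp θ))

/-- Spherical Laplacian `Δ_S f(θ) = Tr f''_S(θ)`. -/
def sLap (f : E n → ℝ) (θ : E n) : ℝ :=
  LinearMap.trace ℝ (E n) (sHess f θ).toLinearMap

/-- Euclidean Laplacian `Δ f = Tr f''`. -/
def eLap (f : E n → ℝ) (x : E n) : ℝ :=
  LinearMap.trace ℝ (E n) (hess f x).toLinearMap

/-- 0-homogeneous extension to `ℝⁿ \ {0}` of (the restriction to the sphere of) `g`. -/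
def ext0 (g : E n → ℝ) : E n → ℝ := fun x => g (‖x‖⁻¹ • x)

/-!
For `n ≥ 3`, the logarithmic Sobolev inequality `Ent(w) ≤ 1 / (2 (n - 1)) ∫ |∇_S w|² / w` holds on
the sphere, because the entropy decays along the heat flow: it tends to `0`, its derivative is minus
the Fisher information `∫ |∇_S w|² / w`, and the curvature-dimension condition, read off Bochner's
formula, makes the latter decrease at least at the rate `2 (n - 1)`. The Laplacian maps polynomials
of degree at most `k`, as functions on the sphere, to such polynomials, so that their heat flow is a
linear ODE in finite dimension. Convolution with zonal polynomials then carries the inequality over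
to positive `C¹` functions.

Put `u = |∇f|²`. As `‖f''‖ ≤ 1`, one has `|∇_S f|² ≤ u` and `|∇_S u|² ≤ 4 u`. Herbst's argument
for `exp (s u)` bounds `log ∫ exp (s u)` in terms of `∫ u`. The logarithmic Sobolev inequality for
`exp (t f)` involves the mean of `u` for the measure of density proportional to `exp (t f)`, which
the Gibbs variational principle bounds in terms of the entropy of `exp (t f)` and of
`log ∫ exp (s u)`, and Herbst's argument applies a second time, to `f`.

For `n = 2` the sphere has no curvature. There, `max f - min f ≤ π ∫ |∇f|`, as two arcs join any two
points of the circle, and Hoeffding's lemma concludes.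
-/

section UnitSphere

open scoped ContDiff Topology

/-- The unit sphere `S^{n-1}` of `ℝⁿ`. -/
abbrev unitSphere (n : ℕ) : Set (E n) := Metric.sphere (0 : E n) 1

variable {w g : E n → ℝ} {x : E n} {k : WithTop ℕ∞}

lemma sum_sq_eq_one (hx : x ∈ unitSphere n) : ∑ i, x i ^ 2 = 1 := by
  rw [← EuclideanSpace.real_norm_sq_eq, mem_sphere_zero_iff_norm.1 hx, one_pow]

lemma contDiff_coord (i : Fin n) : ContDiff ℝ k (fun x : E n => x i) :=
  (EuclideanSpace.proj (𝕜 := ℝ) i).contDiff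

lemma differentiableAt_coord (i : Fin n) : DifferentiableAt ℝ (fun x : E n => x i) x :=
  (contDiff_coord (k := 1) i).differentiable one_ne_zero x

lemma fderiv_coord (i : Fin n) (x v : E n) : fderiv ℝ (fun x : E n => x i) x v = v i :=
  congrArg (fun L : E n →L[ℝ] ℝ => L v) (EuclideanSpace.proj (𝕜 := ℝ) i : E n →L[ℝ] ℝ).fderiv

/-- The functions on `ℝⁿ` that are of class `C^k` around every point of the unit sphere. They stand
for the `C^k` functions on the sphere, of which they are extensions. -/
def ContDiffNearSphere (k : WithTop ℕ∞) (w : E n → ℝ) : Prop :=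
  ∀ x ∈ unitSphere n, ContDiffAt ℝ k w x

namespace ContDiffNearSphere

lemma of_le {m : WithTop ℕ∞} (hw : ContDiffNearSphere k w) (hm : m ≤ k) :
    ContDiffNearSphere m w :=
  fun x hx => (hw x hx).of_le hm

lemma differentiableAt (hw : ContDiffNearSphere k w) (hk : k ≠ 0) (hx : x ∈ unitSphere n) :
    DifferentiableAt ℝ w x :=
  (hw x hx).differentiableAt hk

lemma continuousOn (hw : ContDiffNearSphere k w) : ContinuousOn w (unitSphere n) :=
  fun x hx => (hw x hx).continuousAt.continuousWithinAt

lemma continuousOn_fderiv (hw : ContDiffNearSphere 1 w) :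
    ContinuousOn (fderiv ℝ w) (unitSphere n) :=
  fun x hx => ((hw x hx).fderiv_right (m := 0) (by simp)).continuousAt.continuousWithinAt

lemma const (c : ℝ) : ContDiffNearSphere k (fun _ : E n => c) := fun _ _ => contDiffAt_const

lemma coord (i : Fin n) : ContDiffNearSphere k (fun x : E n => x i) :=
  fun _ _ => (contDiff_coord i).contDiffAt

lemma add (hw : ContDiffNearSphere k w) (hg : ContDiffNearSphere k g) :
    ContDiffNearSphere k (fun y => w y + g y) :=
  fun x hx => (hw x hx).add (hg x hx)

lemma mul (hw : ContDiffNearSphere k w) (hg : ContDiffNearSphere k g) :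
    ContDiffNearSphere k (fun y => w y * g y) :=
  fun x hx => (hw x hx).mul (hg x hx)

lemma pow (hw : ContDiffNearSphere k w) (m : ℕ) : ContDiffNearSphere k (fun y => w y ^ m) :=
  fun x hx => (hw x hx).pow m

lemma div (hw : ContDiffNearSphere k w) (hg : ContDiffNearSphere k g)
    (h0 : ∀ x ∈ unitSphere n, g x ≠ 0) : ContDiffNearSphere k (fun y => w y / g y) :=
  fun x hx => (hw x hx).div (hg x hx) (h0 x hx)

lemma sum {ι : Type*} {s : Finset ι} {w : ι → E n → ℝ} (hw : ∀ a ∈ s, ContDiffNearSphere k (w a)) :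
    ContDiffNearSphere k (fun y => ∑ a ∈ s, w a y) :=
  fun x hx => ContDiffAt.sum fun a ha => hw a ha x hx

lemma sqrt (hw : ContDiffNearSphere k w) (h0 : ∀ x ∈ unitSphere n, 0 < w x) :
    ContDiffNearSphere k (fun x => √(w x)) :=
  fun x hx => (hw x hx).sqrt (h0 x hx).ne'

lemma log (hw : ContDiffNearSphere k w) (h0 : ∀ x ∈ unitSphere n, 0 < w x) :
    ContDiffNearSphere k (fun x => Real.log (w x)) :=
  fun x hx => (hw x hx).log (h0 x hx).ne'

lemma smooth_differentiableAt (hw : ContDiffNearSphere ∞ w) (hx : x ∈ unitSphere n) :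
    DifferentiableAt ℝ w x :=
  hw.differentiableAt (by simp) hx

end ContDiffNearSphere

end UnitSphere

section Rotations

open scoped ContDiff

variable {w g : E n → ℝ} {x : E n} {i j : Fin n}

/-- The infinitesimal rotation `x ↦ xᵢ eⱼ - xⱼ eᵢ` of the coordinate plane `(i, j)`. -/
def rotationField (i j : Fin n) (x : E n) : E n :=
  x i • EuclideanSpace.single j 1 - x j • EuclideanSpace.single i 1

@[simp] lemma rotationField_self (i : Fin n) (x : E n) : rotationField i i x = 0 := sub_self _

lemma rotationField_swap (i j : Fin n) (x : E n) : rotationField j i x = -rotationField i j x :=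
  (neg_sub _ _).symm

lemma contDiff_rotationField (i j : Fin n) {k : WithTop ℕ∞} :
    ContDiff ℝ k (rotationField i j : E n → E n) :=
  ((contDiff_coord i).smul contDiff_const).sub ((contDiff_coord j).smul contDiff_const)

/-- The rotation by the angle `s` in the coordinate plane `(i, j)`, for `i ≠ j`. -/
def rotate (i j : Fin n) (s : ℝ) (x : E n) : E n :=
  x + ((Real.cos s - 1) * x i - Real.sin s * x j) • EuclideanSpace.single i 1
    + ((Real.cos s - 1) * x j + Real.sin s * x i) • EuclideanSpace.single j 1

lemma rotate_zero (i j : Fin n) (x : E n) : rotate i j 0 x = x := by simp [rotate]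

lemma norm_rotate (hij : i ≠ j) (s : ℝ) (x : E n) : ‖rotate i j s x‖ = ‖x‖ := by
  rw [← sq_eq_sq₀ (norm_nonneg _) (norm_nonneg _), rotate, norm_add_sq_real, norm_add_sq_real]
  simp only [inner_add_left, inner_smul_right, inner_smul_left,
    EuclideanSpace.inner_single_right, norm_smul, mul_pow, PiLp.norm_single, PiLp.single_apply,
    if_neg hij.symm, Real.norm_eq_abs, sq_abs, norm_one, conj_trivial]
  linear_combination (x i ^ 2 + x j ^ 2) * Real.sin_sq_add_cos_sq s

lemma rotate_mem_unitSphere (hij : i ≠ j) (s : ℝ) (hx : x ∈ unitSphere n) :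
    rotate i j s x ∈ unitSphere n := by
  rwa [mem_sphere_zero_iff_norm, norm_rotate hij, ← mem_sphere_zero_iff_norm]

/-- `rotate i j s` as a linear isometry. -/
def rotateIsometry (hij : i ≠ j) (s : ℝ) : E n ≃ₗᵢ[ℝ] E n :=
  LinearIsometry.toLinearIsometryEquiv
    { toFun := rotate i j s
      map_add' := fun x y => by simp only [rotate, PiLp.add_apply]; module
      map_smul' := fun c x => by
        simp only [rotate, PiLp.smul_apply, smul_eq_mul, RingHom.id_apply]; module
      norm_map' := norm_rotate hij s } rfl

lemma rotateIsometry_apply (hij : i ≠ j) (s : ℝ) (x : E n) :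
    rotateIsometry hij s x = rotate i j s x := rfl

lemma hasDerivAt_rotate (hij : i ≠ j) (s : ℝ) (x : E n) :
    HasDerivAt (fun s => rotate i j s x) (rotationField i j (rotate i j s x)) s := by
  have hcos := (Real.hasDerivAt_cos s).sub_const 1
  have hsin := Real.hasDerivAt_sin s
  have hi := ((hcos.mul_const (x i)).sub (hsin.mul_const (x j))).smul_const
    (EuclideanSpace.single i (1 : ℝ))
  have hj := ((hcos.mul_const (x j)).add (hsin.mul_const (x i))).smul_const
    (EuclideanSpace.single j (1 : ℝ))
  refine ((hi.const_add x).add hj).congr_deriv ?_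
  simp only [rotationField, rotate, PiLp.add_apply, PiLp.smul_apply, PiLp.single_apply, if_neg hij,
    if_neg hij.symm, smul_eq_mul, if_true]
  module

/-- The derivative of `w` along the infinitesimal rotation `rotationField i j`. -/
def rotationDeriv (i j : Fin n) (w : E n → ℝ) : E n → ℝ :=
  fun x => fderiv ℝ w x (rotationField i j x)

lemma rotationDeriv_self (i : Fin n) (w : E n → ℝ) (x : E n) : rotationDeriv i i w x = 0 := by
  rw [rotationDeriv, rotationField_self, map_zero]

lemma rotationDeriv_swap (i j : Fin n) (w : E n → ℝ) :
    rotationDeriv j i w = fun x => -rotationDeriv i j w x := by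
  funext x; rw [rotationDeriv, rotationField_swap, map_neg, rotationDeriv]

lemma rotationDeriv_coord_mul (i j k : Fin n) (hw : DifferentiableAt ℝ w x) :
    rotationDeriv i j (fun y => y k * w y) x =
      x k * rotationDeriv i j w x + w x * rotationField i j x k := by
  simp [rotationDeriv, fderiv_fun_mul (differentiableAt_coord k) hw, fderiv_coord]

lemma ContDiffNearSphere.rotationDeriv (hw : ContDiffNearSphere ∞ w) (i j : Fin n) :
    ContDiffNearSphere ∞ (rotationDeriv i j w) :=
  fun x hx => ((hw x hx).fderiv_right (by simp)).clm_apply (contDiff_rotationField i j).contDiffAt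

lemma ContDiffNearSphere.continuousOn_rotationDeriv (hw : ContDiffNearSphere 1 w) (i j : Fin n) :
    ContinuousOn (SecondOrderConc.rotationDeriv i j w) (unitSphere n) :=
  hw.continuousOn_fderiv.clm_apply (contDiff_rotationField (k := 0) i j).continuous.continuousOn

lemma hasDerivAt_comp_rotate (hij : i ≠ j) {s : ℝ} (hw : DifferentiableAt ℝ w (rotate i j s x)) :
    HasDerivAt (fun s => w (rotate i j s x)) (rotationDeriv i j w (rotate i j s x)) s :=
  hw.hasFDerivAt.comp_hasDerivAt s (hasDerivAt_rotate hij s x)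

lemma rotationDeriv_congr_of_eqOn (hw : DifferentiableAt ℝ w x) (hg : DifferentiableAt ℝ g x)
    (hx : x ∈ unitSphere n) (h : Set.EqOn w g (unitSphere n)) (i j : Fin n) :
    rotationDeriv i j w x = rotationDeriv i j g x := by
  rcases eq_or_ne i j with rfl | hij
  · simp only [rotationDeriv_self]
  have hw' := hasDerivAt_comp_rotate hij (s := 0) (x := x) (w := w) (by rwa [rotate_zero])
  have hg' := hasDerivAt_comp_rotate hij (s := 0) (x := x) (w := g) (by rwa [rotate_zero])
  simp only [h (rotate_mem_unitSphere hij _ hx), rotate_zero] at hw' hg'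
  exact hw'.unique hg'

end Rotations

section TangentDeriv

open scoped ContDiff

variable {w g : E n → ℝ} {x : E n} {i j : Fin n}

/-- At a point `x` of the unit sphere, the orthogonal projection `eᵢ - xᵢ x` of the `i`-th
coordinate vector onto the tangent space. -/
def tangentVec (i : Fin n) (x : E n) : E n := EuclideanSpace.single i 1 - x i • x

@[simp] lemma tangentVec_apply (i j : Fin n) (x : E n) :
    tangentVec i x j = (if i = j then 1 else 0) - x i * x j := by
  simp [tangentVec, eq_comm]

lemma contDiff_tangentVec (i : Fin n) {k : WithTop ℕ∞} :
    ContDiff ℝ k (tangentVec i : E n → E n) :=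
  contDiff_const.sub ((contDiff_coord i).smul contDiff_id)

lemma sum_coord_smul_tangentVec (hx : x ∈ unitSphere n) : ∑ i, x i • tangentVec i x = 0 := by
  ext j
  have hsum : ∑ i, x i * (x i * x j) = x j := by
    simp only [← mul_assoc, ← sq, ← Finset.sum_mul, sum_sq_eq_one hx, one_mul]
  simp [mul_sub, hsum]

lemma sum_coord_smul_rotationField (hx : x ∈ unitSphere n) (j : Fin n) :
    ∑ i, x i • rotationField i j x = tangentVec j x := by
  ext k
  have hsum : ∑ i, x i * x i = 1 := by simpa only [sq] using sum_sq_eq_one hx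
  simp [rotationField, tangentVec, Pi.single_apply, mul_sub, hsum, mul_comm (x j)]

/-- The derivative of `w` along `tangentVec i`. On the unit sphere, it is the `i`-th coordinate of
the spherical gradient of `w`. -/
def tangentDeriv (i : Fin n) (w : E n → ℝ) : E n → ℝ := fun x => fderiv ℝ w x (tangentVec i x)

local notation "𝒟" => tangentDeriv

lemma sum_coord_mul_tangentDeriv (hx : x ∈ unitSphere n) (w : E n → ℝ) :
    ∑ i, x i * 𝒟 i w x = 0 := by
  simpa [tangentDeriv] using congrArg (fderiv ℝ w x) (sum_coord_smul_tangentVec hx)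

lemma sum_coord_mul_rotationDeriv (hx : x ∈ unitSphere n) (w : E n → ℝ) (j : Fin n) :
    ∑ i, x i * rotationDeriv i j w x = 𝒟 j w x := by
  simpa [rotationDeriv, tangentDeriv] using
    congrArg (fderiv ℝ w x) (sum_coord_smul_rotationField hx j)

lemma rotationDeriv_eq_tangentDeriv (i j : Fin n) (w : E n → ℝ) (x : E n) :
    rotationDeriv i j w x = x i * 𝒟 j w x - x j * 𝒟 i w x := by
  simp only [rotationDeriv, tangentDeriv, rotationField, tangentVec, map_sub, map_smul, smul_eq_mul]
  ring

lemma tangentDeriv_congr_of_eqOn (hw : DifferentiableAt ℝ w x) (hg : DifferentiableAt ℝ g x)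
    (hx : x ∈ unitSphere n) (h : Set.EqOn w g (unitSphere n)) (i : Fin n) :
    𝒟 i w x = 𝒟 i g x := by
  simp only [← sum_coord_mul_rotationDeriv hx, rotationDeriv_congr_of_eqOn hw hg hx h]

lemma tangentDeriv_const (c : ℝ) : 𝒟 i (fun _ : E n => c) = fun _ => 0 := by
  funext x; simp [tangentDeriv]

lemma tangentDeriv_coord (i j : Fin n) (x : E n) :
    𝒟 i (fun y => y j) x = (if i = j then 1 else 0) - x i * x j := by
  simp [tangentDeriv, fderiv_coord]

lemma tangentDeriv_add (hw : DifferentiableAt ℝ w x) (hg : DifferentiableAt ℝ g x) :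
    𝒟 i (fun y => w y + g y) x = 𝒟 i w x + 𝒟 i g x := by
  simp [tangentDeriv, fderiv_fun_add hw hg]

lemma tangentDeriv_sub (hw : DifferentiableAt ℝ w x) (hg : DifferentiableAt ℝ g x) :
    𝒟 i (fun y => w y - g y) x = 𝒟 i w x - 𝒟 i g x := by
  simp [tangentDeriv, fderiv_fun_sub hw hg]

lemma tangentDeriv_mul (hw : DifferentiableAt ℝ w x) (hg : DifferentiableAt ℝ g x) :
    𝒟 i (fun y => w y * g y) x = w x * 𝒟 i g x + g x * 𝒟 i w x := by
  simp [tangentDeriv, fderiv_fun_mul hw hg]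

lemma tangentDeriv_const_mul (c : ℝ) (hw : DifferentiableAt ℝ w x) :
    𝒟 i (fun y => c * w y) x = c * 𝒟 i w x := by
  rw [tangentDeriv_mul (differentiableAt_const c) hw, tangentDeriv_const, mul_zero, add_zero]

lemma tangentDeriv_sum {ι : Type*} (s : Finset ι) {w : ι → E n → ℝ}
    (hw : ∀ a ∈ s, DifferentiableAt ℝ (w a) x) :
    𝒟 i (fun y => ∑ a ∈ s, w a y) x = ∑ a ∈ s, 𝒟 i (w a) x := by
  simp [tangentDeriv, fderiv_fun_sum hw]

lemma tangentDeriv_comp {φ : ℝ → ℝ} {φ' : ℝ} (hφ : HasDerivAt φ φ' (w x))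
    (hw : DifferentiableAt ℝ w x) : 𝒟 i (fun y => φ (w y)) x = φ' * 𝒟 i w x := by
  have h : HasFDerivAt (fun y => φ (w y)) (φ' • fderiv ℝ w x) x :=
    hφ.comp_hasFDerivAt x hw.hasFDerivAt
  simp [tangentDeriv, h.fderiv]

lemma ContDiffNearSphere.tangentDeriv (hw : ContDiffNearSphere ∞ w) :
    ContDiffNearSphere ∞ (𝒟 i w) :=
  fun x hx => ((hw x hx).fderiv_right (by simp)).clm_apply (contDiff_tangentVec i).contDiffAt

lemma ContDiffNearSphere.continuousOn_tangentDeriv (hw : ContDiffNearSphere 1 w) :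
    ContinuousOn (𝒟 i w) (unitSphere n) :=
  hw.continuousOn_fderiv.clm_apply (contDiff_tangentVec (k := 0) i).continuous.continuousOn

/-- The inner product of the spherical gradients of `w` and `g`. -/
def gradInner (w g : E n → ℝ) : E n → ℝ := fun x => ∑ i, 𝒟 i w x * 𝒟 i g x

/-- The squared norm of the spherical gradient of `w`. -/
def gradSq (w : E n → ℝ) : E n → ℝ := fun x => ∑ i, 𝒟 i w x ^ 2

lemma gradInner_self (w : E n → ℝ) (x : E n) : gradInner w w x = gradSq w x :=
  Finset.sum_congr rfl fun _ _ => (sq _).symm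

lemma gradInner_comm (w g : E n → ℝ) (x : E n) : gradInner w g x = gradInner g w x :=
  Finset.sum_congr rfl fun _ _ => mul_comm _ _

lemma gradSq_nonneg (w : E n → ℝ) (x : E n) : 0 ≤ gradSq w x :=
  Finset.sum_nonneg fun _ _ => sq_nonneg _

lemma gradInner_comp_left {φ : ℝ → ℝ} {φ' : ℝ} (hφ : HasDerivAt φ φ' (w x))
    (hw : DifferentiableAt ℝ w x) (g : E n → ℝ) :
    gradInner (fun y => φ (w y)) g x = φ' * gradInner w g x := by
  simp only [gradInner, tangentDeriv_comp hφ hw, Finset.mul_sum, mul_assoc]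

lemma gradSq_comp {φ : ℝ → ℝ} {φ' : ℝ} (hφ : HasDerivAt φ φ' (w x))
    (hw : DifferentiableAt ℝ w x) : gradSq (fun y => φ (w y)) x = φ' ^ 2 * gradSq w x := by
  simp only [gradSq, tangentDeriv_comp hφ hw, Finset.mul_sum, mul_pow]

lemma gradInner_mul_left (hw : DifferentiableAt ℝ w x) (hg : DifferentiableAt ℝ g x)
    (u : E n → ℝ) : gradInner (fun y => w y * g y) u x =
      w x * gradInner g u x + g x * gradInner w u x := by
  simp only [gradInner, tangentDeriv_mul hw hg, Finset.mul_sum, ← Finset.sum_add_distrib]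
  exact Finset.sum_congr rfl fun _ _ => by ring

lemma ContDiffNearSphere.gradInner (hw : ContDiffNearSphere ∞ w) (hg : ContDiffNearSphere ∞ g) :
    ContDiffNearSphere ∞ (gradInner w g) :=
  .sum fun _ _ => hw.tangentDeriv.mul hg.tangentDeriv

lemma ContDiffNearSphere.gradSq (hw : ContDiffNearSphere ∞ w) : ContDiffNearSphere ∞ (gradSq w) :=
  .sum fun _ _ => hw.tangentDeriv.pow 2

lemma ContDiffNearSphere.continuousOn_gradSq (hw : ContDiffNearSphere 1 w) :
    ContinuousOn (SecondOrderConc.gradSq w) (unitSphere n) :=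
  continuousOn_finsetSum _ fun _ _ => hw.continuousOn_tangentDeriv.pow 2

end TangentDeriv

section Trace

variable {ι : Type*} [Fintype ι]

-- Cauchy-Schwarz against the orthogonal projection onto the complement of the kernel vector.
lemma sq_trace_le_of_mulVec_eq_zero (M : Matrix ι ι ℝ) {x : ι → ℝ} (hx : ∑ i, x i ^ 2 = 1)
    (hM : M.mulVec x = 0) : M.trace ^ 2 ≤ (Fintype.card ι - 1) * ∑ i, ∑ j, M i j ^ 2 := by
  classical
  have hker : ∀ i, ∑ j, M i j * x j = 0 := congrFun hM
  have htrace : ∑ p : ι × ι, M p.1 p.2 * ((if p.1 = p.2 then 1 else 0) - x p.1 * x p.2) =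
      M.trace := by
    have hrow : ∀ i j, M i j * ((if i = j then 1 else 0) - x i * x j) =
        (if i = j then M i j else 0) - x i * (M i j * x j) := by
      intro i j; split_ifs <;> ring
    simp [Fintype.sum_prod_type, hrow, Finset.sum_sub_distrib, ← Finset.mul_sum, hker,
      Matrix.trace]
  have hproj : ∑ p : ι × ι, ((if p.1 = p.2 then 1 else 0) - x p.1 * x p.2) ^ 2 =
      (Fintype.card ι - 1 : ℝ) := by
    have hrow : ∀ i j, ((if i = j then 1 else 0) - x i * x j) ^ 2 =
        (if i = j then 1 - 2 * x i * x j else 0) + x i ^ 2 * x j ^ 2 := by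
      intro i j; split_ifs <;> ring
    simp only [Fintype.sum_prod_type, hrow, Finset.sum_add_distrib, Finset.sum_ite_eq,
      Finset.mem_univ, if_true, ← Finset.mul_sum, hx, mul_one, Finset.sum_sub_distrib, mul_assoc,
      ← sq, Finset.sum_const, Finset.card_univ, nsmul_eq_mul]
    ring
  calc M.trace ^ 2
      ≤ (∑ p : ι × ι, M p.1 p.2 ^ 2) *
          ∑ p : ι × ι, ((if p.1 = p.2 then 1 else 0) - x p.1 * x p.2) ^ 2 :=
        htrace ▸ Finset.sum_mul_sq_le_sq_mul_sq _ _ _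
    _ = _ := by rw [hproj, Fintype.sum_prod_type, mul_comm]

end Trace

section SecondDerivatives

open scoped ContDiff Topology

local notation "𝒟" => tangentDeriv

variable {w g : E n → ℝ} {x : E n}

/-- The covariant Hessian on the unit sphere: `covHess w i j` is the value of the Riemannian
Hessian of `w` at the tangent vectors `tangentVec i` and `tangentVec j`. -/
def covHess (w : E n → ℝ) (i j : Fin n) : E n → ℝ := fun x => 𝒟 i (𝒟 j w) x + x j * 𝒟 i w x

lemma covHess_eq_fderiv_fderiv (hw : ContDiffAt ℝ 2 w x) (i j : Fin n) :
    covHess w i j x = fderiv ℝ (fderiv ℝ w) x (tangentVec i x) (tangentVec j x) -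
      tangentVec i x j * fderiv ℝ w x x := by
  have hw' : HasFDerivAt (fderiv ℝ w) (fderiv ℝ (fderiv ℝ w) x) x :=
    ((hw.fderiv_right (m := 1) (by norm_num)).differentiableAt one_ne_zero).hasFDerivAt
  have hvec : HasFDerivAt (tangentVec j) (-(x j • ContinuousLinearMap.id ℝ (E n) +
      (EuclideanSpace.proj (𝕜 := ℝ) j : E n →L[ℝ] ℝ).smulRight x)) x :=
    ((EuclideanSpace.proj (𝕜 := ℝ) j : E n →L[ℝ] ℝ).hasFDerivAt.smul (hasFDerivAt_id x)).const_sub _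
  have h : 𝒟 i (𝒟 j w) x = _ := congrArg (· (tangentVec i x)) (hw'.clm_apply hvec).fderiv
  rw [covHess, h]
  simp [tangentDeriv]
  ring

lemma covHess_comm (hw : ContDiffAt ℝ 2 w x) (i j : Fin n) :
    covHess w i j x = covHess w j i x := by
  have hsymm := hw.isSymmSndFDerivAt (by simp) (tangentVec i x) (tangentVec j x)
  rw [covHess_eq_fderiv_fderiv hw, covHess_eq_fderiv_fderiv hw, hsymm, tangentVec_apply,
    tangentVec_apply, mul_comm (x i)]
  simp only [eq_comm]

lemma tangentDeriv_comm (hw : ContDiffAt ℝ 2 w x) (i j : Fin n) :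
    𝒟 i (𝒟 j w) x = 𝒟 j (𝒟 i w) x + x i * 𝒟 j w x - x j * 𝒟 i w x :=
  eq_sub_of_add_eq (covHess_comm hw i j)

lemma sum_coord_mul_tangentDeriv_tangentDeriv (hw : ContDiffNearSphere ∞ w)
    (hx : x ∈ unitSphere n) (i : Fin n) : ∑ j, x j * 𝒟 i (𝒟 j w) x = -𝒟 i w x := by
  have hprod : ∀ j, 𝒟 i (fun y => y j * 𝒟 j w y) x =
      x j * 𝒟 i (𝒟 j w) x + 𝒟 j w x * ((if i = j then 1 else 0) - x i * x j) := fun j => by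
    rw [tangentDeriv_mul (differentiableAt_coord j) (hw.tangentDeriv.smooth_differentiableAt hx),
      tangentDeriv_coord]
  have hzero : 𝒟 i (fun y => ∑ j, y j * 𝒟 j w y) x = 0 := by
    rw [← congrFun (tangentDeriv_const (i := i) 0) x]
    exact tangentDeriv_congr_of_eqOn
      ((ContDiffNearSphere.sum fun j _ =>
        (ContDiffNearSphere.coord j).mul hw.tangentDeriv).smooth_differentiableAt hx)
      (differentiableAt_const 0) hx (fun y hy => sum_coord_mul_tangentDeriv hy w) i
  rw [tangentDeriv_sum _ fun j _ =>
      ((ContDiffNearSphere.coord j).mul hw.tangentDeriv).smooth_differentiableAt hx,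
    Finset.sum_congr rfl fun j _ => hprod j] at hzero
  have hnormal : ∑ j, 𝒟 j w x * (x i * x j) = 0 := by
    simp_rw [mul_left_comm _ (x i), ← Finset.mul_sum, mul_comm _ (x _),
      sum_coord_mul_tangentDeriv hx, mul_zero]
  simp only [mul_sub, Finset.sum_add_distrib, Finset.sum_sub_distrib, mul_ite, mul_one, mul_zero,
    Finset.sum_ite_eq, Finset.mem_univ, if_true, hnormal, sub_zero] at hzero
  exact eq_neg_of_add_eq_zero_left hzero

/-- The spherical Laplacian (Laplace–Beltrami operator) of the unit sphere, in terms of the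
derivatives along the vectors `tangentVec i`. -/
def sphLaplacian (w : E n → ℝ) : E n → ℝ := fun x => ∑ i, 𝒟 i (𝒟 i w) x

lemma ContDiffNearSphere.sphLaplacian (hw : ContDiffNearSphere ∞ w) :
    ContDiffNearSphere ∞ (sphLaplacian w) :=
  .sum fun _ _ => hw.tangentDeriv.tangentDeriv

lemma sphLaplacian_congr_of_eqOn (hw : ContDiffNearSphere ∞ w) (hg : ContDiffNearSphere ∞ g)
    (h : Set.EqOn w g (unitSphere n)) (hx : x ∈ unitSphere n) :
    sphLaplacian w x = sphLaplacian g x :=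
  Finset.sum_congr rfl fun i _ => tangentDeriv_congr_of_eqOn
    (hw.tangentDeriv.smooth_differentiableAt hx) (hg.tangentDeriv.smooth_differentiableAt hx) hx
    (fun _ hy => tangentDeriv_congr_of_eqOn (hw.smooth_differentiableAt hy)
      (hg.smooth_differentiableAt hy) hy h i) i

lemma sphLaplacian_mul (hw : ContDiffNearSphere ∞ w) (hg : ContDiffNearSphere ∞ g)
    (hx : x ∈ unitSphere n) : sphLaplacian (fun y => w y * g y) x =
      w x * sphLaplacian g x + g x * sphLaplacian w x + 2 * gradInner w g x := by
  have hsecond : ∀ i, 𝒟 i (𝒟 i (fun y => w y * g y)) x =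
      w x * 𝒟 i (𝒟 i g) x + g x * 𝒟 i (𝒟 i w) x + 2 * (𝒟 i w x * 𝒟 i g x) := fun i => by
    rw [tangentDeriv_congr_of_eqOn ((hw.mul hg).tangentDeriv.smooth_differentiableAt hx)
        (((hw.mul hg.tangentDeriv).add (hg.mul hw.tangentDeriv)).smooth_differentiableAt hx) hx
        (fun y hy => tangentDeriv_mul (hw.smooth_differentiableAt hy)
          (hg.smooth_differentiableAt hy)) i,
      tangentDeriv_add ((hw.mul hg.tangentDeriv).smooth_differentiableAt hx)
        ((hg.mul hw.tangentDeriv).smooth_differentiableAt hx),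
      tangentDeriv_mul (hw.smooth_differentiableAt hx) (hg.tangentDeriv.smooth_differentiableAt hx),
      tangentDeriv_mul (hg.smooth_differentiableAt hx) (hw.tangentDeriv.smooth_differentiableAt hx)]
    ring
  simp only [sphLaplacian, hsecond, Finset.sum_add_distrib, Finset.mul_sum, gradInner]

lemma sphLaplacian_const_mul (c : ℝ) (hw : ContDiffNearSphere ∞ w) (hx : x ∈ unitSphere n) :
    sphLaplacian (fun y => c * w y) x = c * sphLaplacian w x := by
  rw [sphLaplacian_mul (ContDiffNearSphere.const c) hw hx]
  simp only [sphLaplacian, gradInner, tangentDeriv_const, Finset.sum_const_zero, zero_mul, mul_zero,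
    add_zero]

lemma sphLaplacian_sum {ι : Type*} {s : Finset ι} {w : ι → E n → ℝ}
    (hw : ∀ a ∈ s, ContDiffNearSphere ∞ (w a)) (hx : x ∈ unitSphere n) :
    sphLaplacian (fun y => ∑ a ∈ s, w a y) x = ∑ a ∈ s, sphLaplacian (w a) x := by
  have hsecond : ∀ i, 𝒟 i (𝒟 i (fun y => ∑ a ∈ s, w a y)) x = ∑ a ∈ s, 𝒟 i (𝒟 i (w a)) x := by
    intro i
    rw [tangentDeriv_congr_of_eqOn
        ((ContDiffNearSphere.sum hw).tangentDeriv.smooth_differentiableAt hx)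
        ((ContDiffNearSphere.sum fun a ha => (hw a ha).tangentDeriv).smooth_differentiableAt hx) hx
        (fun y hy => tangentDeriv_sum s fun a ha => (hw a ha).smooth_differentiableAt hy) i,
      tangentDeriv_sum s fun a ha => (hw a ha).tangentDeriv.smooth_differentiableAt hx]
  simp only [sphLaplacian, hsecond]
  exact Finset.sum_comm

lemma sum_coord_mul_tangentDeriv_rotationDeriv (hw : ContDiffNearSphere ∞ w)
    (hx : x ∈ unitSphere n) (j : Fin n) :
    ∑ i, x i * 𝒟 j (rotationDeriv i j w) x = 𝒟 j (𝒟 j w) x + x j * 𝒟 j w x := by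
  have hdiff : ∀ i, ContDiffNearSphere ∞ fun y : E n => y i * rotationDeriv i j w y :=
    fun i => (ContDiffNearSphere.coord i).mul (hw.rotationDeriv i j)
  have hprod : ∀ i, 𝒟 j (fun y => y i * rotationDeriv i j w y) x =
      x i * 𝒟 j (rotationDeriv i j w) x +
        rotationDeriv i j w x * ((if j = i then 1 else 0) - x j * x i) := fun i => by
    rw [tangentDeriv_mul (differentiableAt_coord i)
      ((hw.rotationDeriv i j).smooth_differentiableAt hx), tangentDeriv_coord]
  have hsum : 𝒟 j (fun y => ∑ i, y i * rotationDeriv i j w y) x = 𝒟 j (𝒟 j w) x :=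
    tangentDeriv_congr_of_eqOn ((ContDiffNearSphere.sum fun i _ => hdiff i).smooth_differentiableAt
      hx) (hw.tangentDeriv.smooth_differentiableAt hx) hx
      (fun y hy => sum_coord_mul_rotationDeriv hy w j) j
  have hradial : ∑ i, rotationDeriv i j w x * (x j * x i) = x j * 𝒟 j w x := by
    rw [← sum_coord_mul_rotationDeriv hx, Finset.mul_sum]
    exact Finset.sum_congr rfl fun i _ => by ring
  rw [tangentDeriv_sum _ fun i _ => (hdiff i).smooth_differentiableAt hx,
    Finset.sum_congr rfl fun i _ => hprod i] at hsum
  simp only [mul_sub, Finset.sum_add_distrib, Finset.sum_sub_distrib, mul_ite, mul_one, mul_zero,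
    Finset.sum_ite_eq, Finset.mem_univ, if_true, hradial, rotationDeriv_self] at hsum
  linarith

lemma sum_rotationDeriv_rotationDeriv (hw : ContDiffNearSphere ∞ w) (hx : x ∈ unitSphere n) :
    ∑ j, ∑ i, rotationDeriv i j (rotationDeriv i j w) x = 2 * sphLaplacian w x := by
  have hswap : ∀ i j, 𝒟 i (rotationDeriv i j w) x = -𝒟 i (rotationDeriv j i w) x := fun i j => by
    rw [rotationDeriv_swap j i, tangentDeriv, tangentDeriv, fderiv_fun_neg,
      neg_apply]
  have hhalf : ∑ j, ∑ i, x i * 𝒟 j (rotationDeriv i j w) x = sphLaplacian w x := by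
    simp only [sum_coord_mul_tangentDeriv_rotationDeriv hw hx, Finset.sum_add_distrib,
      sum_coord_mul_tangentDeriv hx, add_zero, sphLaplacian]
  have hsplit : ∀ i j, rotationDeriv i j (rotationDeriv i j w) x =
      x i * 𝒟 j (rotationDeriv i j w) x + x j * 𝒟 i (rotationDeriv j i w) x := fun i j => by
    rw [rotationDeriv_eq_tangentDeriv, hswap, mul_neg, sub_neg_eq_add]
  simp only [hsplit, Finset.sum_add_distrib, hhalf]
  rw [Finset.sum_comm, hhalf, two_mul]

lemma sphLaplacian_tangentDeriv (hw : ContDiffNearSphere ∞ w) (hx : x ∈ unitSphere n)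
    (j : Fin n) : sphLaplacian (𝒟 j w) x =
      𝒟 j (sphLaplacian w) x + (n - 3) * 𝒟 j w x - 2 * x j * sphLaplacian w x := by
  have hthird : ∀ i, 𝒟 i (𝒟 i (𝒟 j w)) x = 𝒟 j (𝒟 i (𝒟 i w)) x +
      x i * 𝒟 j (𝒟 i w) x + x i * 𝒟 i (𝒟 j w) x + (1 - x i ^ 2) * 𝒟 j w x -
      (if i = j then 𝒟 i w x else 0) + x j * (x i * 𝒟 i w x) - 2 * x j * 𝒟 i (𝒟 i w) x :=
    fun i => by
      have hd : ∀ k l, DifferentiableAt ℝ (fun y => y k * 𝒟 l w y) x := fun k l =>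
        ((ContDiffNearSphere.coord k).mul hw.tangentDeriv).smooth_differentiableAt hx
      have hdd := (hw.tangentDeriv (i := i)).tangentDeriv (i := j) |>.smooth_differentiableAt hx
      have hsmooth : ∀ y ∈ unitSphere n, ContDiffAt ℝ 2 w y := hw.of_le (by norm_cast)
      rw [tangentDeriv_congr_of_eqOn (hw.tangentDeriv.tangentDeriv.smooth_differentiableAt hx)
          ((hdd.fun_add (hd i j)).fun_sub (hd j i)) hx
          (fun y hy => tangentDeriv_comm (hsmooth y hy) i j) i,
        tangentDeriv_sub (hdd.fun_add (hd i j)) (hd j i), tangentDeriv_add hdd (hd i j),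
        tangentDeriv_mul (differentiableAt_coord i) (hw.tangentDeriv.smooth_differentiableAt hx),
        tangentDeriv_mul (differentiableAt_coord j) (hw.tangentDeriv.smooth_differentiableAt hx),
        tangentDeriv_coord, tangentDeriv_coord,
        tangentDeriv_comm (hw.tangentDeriv.of_le (m := 2) (by norm_cast) x hx)]
      simp only [if_true]
      split_ifs <;> ring
  have hleibniz : 𝒟 j (sphLaplacian w) x = ∑ i, 𝒟 j (𝒟 i (𝒟 i w)) x :=
    tangentDeriv_sum _ fun i _ => hw.tangentDeriv.tangentDeriv.smooth_differentiableAt hx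
  rw [sphLaplacian, Finset.sum_congr rfl fun i _ => hthird i]
  simp only [Finset.sum_sub_distrib, Finset.sum_add_distrib, ← Finset.mul_sum, ← Finset.sum_mul,
    sum_coord_mul_tangentDeriv hx, sum_coord_mul_tangentDeriv_tangentDeriv hw hx,
    sum_sq_eq_one hx, Finset.sum_ite_eq', Finset.mem_univ, if_true, Finset.sum_const,
    Finset.card_univ, Fintype.card_fin, nsmul_eq_mul, ← hleibniz, sphLaplacian]
  ring

/-- The squared Hilbert–Schmidt norm of the covariant Hessian. -/
def hessSq (w : E n → ℝ) : E n → ℝ := fun x => ∑ i, ∑ j, covHess w i j x ^ 2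

/-- The covariant Hessian of `w` evaluated at the spherical gradient of `w`. -/
def hessGrad (w : E n → ℝ) : E n → ℝ := fun x => ∑ i, ∑ j, covHess w i j x * 𝒟 i w x * 𝒟 j w x

lemma hessSq_nonneg (w : E n → ℝ) (x : E n) : 0 ≤ hessSq w x :=
  Finset.sum_nonneg fun _ _ => Finset.sum_nonneg fun _ _ => sq_nonneg _

lemma ContDiffNearSphere.covHess (hw : ContDiffNearSphere ∞ w) (i j : Fin n) :
    ContDiffNearSphere ∞ (covHess w i j) :=
  hw.tangentDeriv.tangentDeriv.add ((ContDiffNearSphere.coord j).mul hw.tangentDeriv)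

lemma ContDiffNearSphere.hessSq (hw : ContDiffNearSphere ∞ w) : ContDiffNearSphere ∞ (hessSq w) :=
  .sum fun i _ => .sum fun j _ => (hw.covHess i j).pow 2

lemma ContDiffNearSphere.hessGrad (hw : ContDiffNearSphere ∞ w) :
    ContDiffNearSphere ∞ (hessGrad w) :=
  .sum fun i _ => .sum fun j _ => ((hw.covHess i j).mul hw.tangentDeriv).mul hw.tangentDeriv

lemma sum_covHess_mul_coord (hw : ContDiffNearSphere ∞ w) (hx : x ∈ unitSphere n) (i : Fin n) :
    ∑ j, covHess w i j x * x j = 0 := by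
  have hsum : ∀ j, covHess w i j x * x j = x j * 𝒟 i (𝒟 j w) x + x j ^ 2 * 𝒟 i w x :=
    fun j => by rw [covHess]; ring
  simp only [hsum, Finset.sum_add_distrib, sum_coord_mul_tangentDeriv_tangentDeriv hw hx,
    ← Finset.sum_mul, sum_sq_eq_one hx, one_mul, neg_add_cancel]

lemma sum_covHess_self (hx : x ∈ unitSphere n) (w : E n → ℝ) :
    ∑ i, covHess w i i x = sphLaplacian w x := by
  simp only [covHess, Finset.sum_add_distrib, sum_coord_mul_tangentDeriv hx, add_zero,
    sphLaplacian]

lemma sum_gradSq_tangentDeriv (hw : ContDiffNearSphere ∞ w) (hx : x ∈ unitSphere n) :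
    ∑ j, gradSq (𝒟 j w) x = hessSq w x + gradSq w x := by
  have hrow : ∀ i, ∑ j, 𝒟 i (𝒟 j w) x ^ 2 = ∑ j, covHess w i j x ^ 2 + 𝒟 i w x ^ 2 := by
    intro i
    have hsq : ∀ j, 𝒟 i (𝒟 j w) x ^ 2 = covHess w i j x ^ 2 -
        2 * 𝒟 i w x * (covHess w i j x * x j) + x j ^ 2 * 𝒟 i w x ^ 2 := fun j => by
      rw [covHess]; ring
    simp only [hsq, Finset.sum_add_distrib, Finset.sum_sub_distrib, ← Finset.mul_sum,
      sum_covHess_mul_coord hw hx, ← Finset.sum_mul, sum_sq_eq_one hx]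
    ring
  simp only [gradSq, hessSq]
  rw [Finset.sum_comm, ← Finset.sum_add_distrib]
  exact Finset.sum_congr rfl fun i _ => hrow i

lemma gradInner_gradSq_self (hw : ContDiffNearSphere ∞ w) (hx : x ∈ unitSphere n) :
    gradInner (gradSq w) w x = 2 * hessGrad w x := by
  have hderiv : ∀ i, 𝒟 i (gradSq w) x = ∑ j, 2 * (covHess w i j x * 𝒟 j w x) := by
    intro i
    have hsq : ∀ j, 𝒟 i (fun y => 𝒟 j w y ^ 2) x =
        2 * (covHess w i j x * 𝒟 j w x) - 2 * 𝒟 i w x * (x j * 𝒟 j w x) := fun j => by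
      simp only [sq]
      rw [tangentDeriv_mul (hw.tangentDeriv.smooth_differentiableAt hx)
        (hw.tangentDeriv.smooth_differentiableAt hx), covHess]
      ring
    have hgradSq : gradSq w = fun y => ∑ j, 𝒟 j w y ^ 2 := rfl
    rw [hgradSq, tangentDeriv_sum _ fun j _ =>
      (hw.tangentDeriv.pow 2).smooth_differentiableAt hx]
    simp only [hsq, Finset.sum_sub_distrib, ← Finset.mul_sum, sum_coord_mul_tangentDeriv hx,
      mul_zero, sub_zero]
  simp only [gradInner, hderiv, hessGrad, Finset.mul_sum, Finset.sum_mul]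
  exact Finset.sum_congr rfl fun i _ => Finset.sum_congr rfl fun j _ => by ring

theorem sphLaplacian_gradSq (hw : ContDiffNearSphere ∞ w) (hx : x ∈ unitSphere n) :
    sphLaplacian (gradSq w) x = 2 * gradInner w (sphLaplacian w) x +
      2 * (n - 2) * gradSq w x + 2 * hessSq w x := by
  have hgradSq : gradSq w = fun y => ∑ j, 𝒟 j w y * 𝒟 j w y := by simp only [← sq]; rfl
  have hsquare : ∀ j, sphLaplacian (fun y => 𝒟 j w y * 𝒟 j w y) x =
      2 * (𝒟 j w x * 𝒟 j (sphLaplacian w) x) + 2 * (n - 3) * 𝒟 j w x ^ 2 -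
        4 * sphLaplacian w x * (x j * 𝒟 j w x) + 2 * gradSq (𝒟 j w) x := fun j => by
    rw [sphLaplacian_mul hw.tangentDeriv hw.tangentDeriv hx, sphLaplacian_tangentDeriv hw hx,
      gradInner_self]
    ring
  calc sphLaplacian (gradSq w) x
      = ∑ j, sphLaplacian (fun y => 𝒟 j w y * 𝒟 j w y) x := by
        rw [hgradSq, sphLaplacian_sum (fun j _ => hw.tangentDeriv.mul hw.tangentDeriv) hx]
    _ = 2 * gradInner w (sphLaplacian w) x + 2 * (n - 3) * gradSq w x +
          2 * ∑ j, gradSq (𝒟 j w) x := by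
        simp only [hsquare, Finset.sum_sub_distrib, Finset.sum_add_distrib, ← Finset.mul_sum,
          sum_coord_mul_tangentDeriv hx, mul_zero, sub_zero, gradInner]
        rfl
    _ = _ := by rw [sum_gradSq_tangentDeriv hw hx]; ring

lemma sq_sphLaplacian_add_mul_gradSq_le (hw : ContDiffNearSphere ∞ w) (hx : x ∈ unitSphere n)
    (c : ℝ) : (sphLaplacian w x + c * gradSq w x) ^ 2 ≤
      (n - 1) * (hessSq w x + 2 * c * hessGrad w x + c ^ 2 * gradSq w x ^ 2) := by
  let M : Matrix (Fin n) (Fin n) ℝ := .of fun i j => covHess w i j x + c * (𝒟 i w x * 𝒟 j w x)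
  have htrace : M.trace = sphLaplacian w x + c * gradSq w x := by
    simp only [M, Matrix.trace, Matrix.diag_apply, Matrix.of_apply, Finset.sum_add_distrib,
      sum_covHess_self hx, ← Finset.mul_sum, ← sq, gradSq]
  have hker : M.mulVec x = 0 := by
    funext i
    have hrow : ∀ j, M i j * x j =
        covHess w i j x * x j + c * 𝒟 i w x * (x j * 𝒟 j w x) := fun j => by
      simp only [M, Matrix.of_apply]; ring
    simp only [Matrix.mulVec, dotProduct, hrow, Finset.sum_add_distrib,
      sum_covHess_mul_coord hw hx, ← Finset.mul_sum, sum_coord_mul_tangentDeriv hx, mul_zero,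
      add_zero, Pi.zero_apply]
  have hnorm : ∑ i, ∑ j, M i j ^ 2 =
      hessSq w x + 2 * c * hessGrad w x + c ^ 2 * gradSq w x ^ 2 := by
    have hsq : gradSq w x ^ 2 = ∑ i, ∑ j, 𝒟 i w x ^ 2 * 𝒟 j w x ^ 2 := by
      rw [sq, gradSq, Finset.sum_mul_sum]
    simp only [hsq, hessSq, hessGrad, Finset.mul_sum, ← Finset.sum_add_distrib]
    exact Finset.sum_congr rfl fun i _ => Finset.sum_congr rfl fun j _ => by
      simp only [M, Matrix.of_apply]; ring
  simpa only [htrace, hnorm, Fintype.card_fin] using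
    sq_trace_le_of_mulVec_eq_zero M (sum_sq_eq_one hx) hker

end SecondDerivatives

section SphereMeasure

open scoped Pointwise

lemma sphMeasure_eq (n : ℕ) : sphMeasure n = ((volume : Measure (E n)).toSphere Set.univ)⁻¹ •
    ((volume : Measure (E n)).toSphere.map Subtype.val) := by
  rw [sphMeasure, Measure.map_apply measurable_subtype_coe .univ, Set.preimage_univ]

instance [NeZero n] : IsProbabilityMeasure (sphMeasure n) where
  measure_univ := by
    rw [sphMeasure_eq, Measure.smul_apply, Measure.map_apply measurable_subtype_coe .univ,
      Set.preimage_univ, smul_eq_mul]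
    exact ENNReal.inv_mul_cancel (Measure.measure_univ_ne_zero.2 (Measure.toSphere_ne_zero _))
      (measure_ne_top _ _)

lemma ae_mem_unitSphere : ∀ᵐ x ∂sphMeasure n, x ∈ unitSphere n := by
  rw [sphMeasure_eq]
  exact Measure.ae_smul_measure ((ae_map_iff measurable_subtype_coe.aemeasurable
    isClosed_sphere.measurableSet).2 (ae_of_all _ Subtype.property)) _

lemma measurePreserving_sphMeasure (L : E n ≃ₗᵢ[ℝ] E n) :
    MeasurePreserving L (sphMeasure n) (sphMeasure n) := by
  refine ⟨L.continuous.measurable, ?_⟩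
  rw [sphMeasure_eq, Measure.map_smul]
  congr 1
  ext s hs
  have hcone : Set.Ioo (0 : ℝ) 1 • (unitSphere n ∩ L ⁻¹' s) =
      L ⁻¹' (Set.Ioo (0 : ℝ) 1 • (unitSphere n ∩ s)) := by
    have hpre : ∀ t, L ⁻¹' t = L.symm '' t := fun t => (L.symm.image_eq_preimage_symm t).symm
    have hcap : unitSphere n ∩ L ⁻¹' s = L.symm '' (unitSphere n ∩ s) := by
      rw [← hpre, Set.preimage_inter, L.preimage_sphere, map_zero]
    rw [hcap, hpre]
    exact (Set.image_image2_distrib_right fun r y => map_smul L.symm r y).symm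
  rw [Measure.map_apply L.continuous.measurable hs,
    Measure.map_apply measurable_subtype_coe (L.continuous.measurable hs),
    Measure.map_apply measurable_subtype_coe hs,
    Measure.toSphere_apply' _ (measurable_subtype_coe hs),
    Measure.toSphere_apply' _ (measurable_subtype_coe (L.continuous.measurable hs)),
    Subtype.image_preimage_coe, Subtype.image_preimage_coe, hcone]
  exact congrArg _
    (L.measurePreserving.measure_preimage_equiv (f := L.toHomeomorph.toMeasurableEquiv) _)

lemma integral_comp_linearIsometryEquiv (L : E n ≃ₗᵢ[ℝ] E n) (w : E n → ℝ) :
    ∫ x, w (L x) ∂sphMeasure n = ∫ x, w x ∂sphMeasure n :=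
  (measurePreserving_sphMeasure L).integral_comp L.toHomeomorph.measurableEmbedding w

lemma sphMeasure_pos_of_isOpen {U : Set (E n)} (hU : IsOpen U)
    (h : (U ∩ unitSphere n).Nonempty) : 0 < sphMeasure n U := by
  obtain ⟨x, hxU, hx⟩ := h
  rw [sphMeasure_eq, Measure.smul_apply, Measure.map_apply measurable_subtype_coe hU.measurableSet,
    smul_eq_mul]
  exact ENNReal.mul_pos (ENNReal.inv_ne_zero.2 (measure_ne_top _ _))
    ((hU.preimage continuous_subtype_val).measure_pos _ ⟨⟨x, hx⟩, hxU⟩).ne'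

variable {w g : E n → ℝ}

lemma integrable_of_continuousOn_unitSphere [NeZero n] (hw : ContinuousOn w (unitSphere n)) :
    Integrable w (sphMeasure n) := by
  have h := hw.integrableOn_compact (isCompact_sphere _ _) (μ := sphMeasure n)
  rwa [IntegrableOn, Measure.restrict_eq_self_of_ae_mem ae_mem_unitSphere] at h

lemma integral_congr_of_eqOn_unitSphere (h : Set.EqOn w g (unitSphere n)) :
    ∫ x, w x ∂sphMeasure n = ∫ x, g x ∂sphMeasure n :=
  integral_congr_ae (ae_mem_unitSphere.mono h)

lemma integral_mono_of_le_on_unitSphere [NeZero n] (hw : ContinuousOn w (unitSphere n))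
    (hg : ContinuousOn g (unitSphere n)) (h : ∀ x ∈ unitSphere n, w x ≤ g x) :
    ∫ x, w x ∂sphMeasure n ≤ ∫ x, g x ∂sphMeasure n :=
  integral_mono_ae (integrable_of_continuousOn_unitSphere hw)
    (integrable_of_continuousOn_unitSphere hg) (ae_mem_unitSphere.mono h)

end SphereMeasure

section IntegrationByParts

open scoped ContDiff

local notation "𝒟" => tangentDeriv

variable [NeZero n] {w g : E n → ℝ}

lemma ContDiffNearSphere.integrable {k : WithTop ℕ∞} (hw : ContDiffNearSphere k w) :
    Integrable w (sphMeasure n) :=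
  integrable_of_continuousOn_unitSphere hw.continuousOn

-- The integral of `w ∘ rotate i j s` does not depend on `s`; differentiate it at `s = 0`.
lemma integral_rotationDeriv (hw : ContDiffNearSphere 1 w) (i j : Fin n) :
    ∫ x, rotationDeriv i j w x ∂sphMeasure n = 0 := by
  rcases eq_or_ne i j with rfl | hij
  · simp only [rotationDeriv_self, integral_zero]
  obtain ⟨C, hC⟩ := (isCompact_sphere (0 : E n) 1).exists_bound_of_continuousOn
    (hw.continuousOn_rotationDeriv i j)
  have hint : ∀ s, Integrable (fun x => w (rotate i j s x)) (sphMeasure n) := fun s =>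
    integrable_of_continuousOn_unitSphere (hw.continuousOn.comp
      (rotateIsometry hij s).continuous.continuousOn fun x hx => rotate_mem_unitSphere hij s hx)
  have hderiv := (hasDerivAt_integral_of_dominated_loc_of_deriv_le (μ := sphMeasure n) (x₀ := 0)
    (F := fun s x => w (rotate i j s x)) (F' := fun s x => rotationDeriv i j w (rotate i j s x))
    (bound := fun _ => C) Filter.univ_mem
    (Filter.Eventually.of_forall fun s => (hint s).aestronglyMeasurable) (hint 0)
    (by simpa only [rotate_zero] using (integrable_of_continuousOn_unitSphere
      (hw.continuousOn_rotationDeriv i j)).aestronglyMeasurable)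
    (ae_mem_unitSphere.mono fun x hx s _ => hC _ (rotate_mem_unitSphere hij s hx))
    (integrable_const C) (ae_mem_unitSphere.mono fun x hx s _ => hasDerivAt_comp_rotate hij
      (hw.differentiableAt one_ne_zero (rotate_mem_unitSphere hij s hx)))).2
  have hconst : (fun s => ∫ x, w (rotate i j s x) ∂sphMeasure n) =
      fun _ => ∫ x, w x ∂sphMeasure n :=
    funext fun s => integral_comp_linearIsometryEquiv (rotateIsometry hij s) w
  rw [hconst] at hderiv
  simpa only [rotate_zero] using hderiv.unique (hasDerivAt_const _ _)

lemma integral_tangentDeriv (hw : ContDiffNearSphere 1 w) (j : Fin n) :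
    ∫ x, 𝒟 j w x ∂sphMeasure n = (n - 1) * ∫ x, x j * w x ∂sphMeasure n := by
  have hcoord : ∀ i, ContDiffNearSphere 1 (fun x : E n => x i * w x) := fun i =>
    (ContDiffNearSphere.coord i).mul hw
  have hsum : Set.EqOn (fun x => ∑ i, rotationDeriv i j (fun y => y i * w y) x)
      (fun x => 𝒟 j w x - (n - 1) * (x j * w x)) (unitSphere n) := by
    intro x hx
    simp only [rotationDeriv_coord_mul _ _ _ (hw.differentiableAt one_ne_zero hx),
      Finset.sum_add_distrib, sum_coord_mul_rotationDeriv hx, ← Finset.mul_sum]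
    simp [rotationField]
    ring
  have hzero : ∫ x, (𝒟 j w x - (n - 1) * (x j * w x)) ∂sphMeasure n = 0 := by
    rw [← integral_congr_of_eqOn_unitSphere hsum, integral_finsetSum _ fun i _ =>
      integrable_of_continuousOn_unitSphere ((hcoord i).continuousOn_rotationDeriv i j)]
    exact Finset.sum_eq_zero fun i _ => integral_rotationDeriv (hcoord i) i j
  rw [integral_sub (integrable_of_continuousOn_unitSphere hw.continuousOn_tangentDeriv)
    ((hcoord j).integrable.const_mul _), integral_const_mul] at hzero
  exact sub_eq_zero.1 hzero

theorem integral_mul_sphLaplacian (hw : ContDiffNearSphere ∞ w) (hg : ContDiffNearSphere ∞ g) :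
    ∫ x, w x * sphLaplacian g x ∂sphMeasure n = -∫ x, gradInner w g x ∂sphMeasure n := by
  have hflux : ∀ j, ContDiffNearSphere ∞ (fun x => w x * 𝒟 j g x) := fun j =>
    hw.mul hg.tangentDeriv
  have hdiv : Set.EqOn (fun x => ∑ j, 𝒟 j (fun y => w y * 𝒟 j g y) x)
      (fun x => w x * sphLaplacian g x + gradInner w g x) (unitSphere n) := by
    intro x hx
    simp only [tangentDeriv_mul (hw.smooth_differentiableAt hx)
      (hg.tangentDeriv.smooth_differentiableAt hx), Finset.sum_add_distrib, sphLaplacian,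
      Finset.mul_sum, gradInner, mul_comm (𝒟 _ g x)]
  have hnormal : Set.EqOn (fun x => ∑ j, x j * (w x * 𝒟 j g x)) 0 (unitSphere n) := fun x hx => by
    simp only [mul_left_comm _ (w x), ← Finset.mul_sum, sum_coord_mul_tangentDeriv hx, mul_zero,
      Pi.zero_apply]
  have hzero : ∫ x, (w x * sphLaplacian g x + gradInner w g x) ∂sphMeasure n = 0 := by
    rw [← integral_congr_of_eqOn_unitSphere hdiv,
      integral_finsetSum _ fun j _ => (hflux j).tangentDeriv.integrable]
    simp only [integral_tangentDeriv ((hflux _).of_le (by simp)), ← Finset.mul_sum]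
    rw [← integral_finsetSum _ fun j _ => ((ContDiffNearSphere.coord j).mul (hflux j)).integrable,
      integral_congr_of_eqOn_unitSphere hnormal, Pi.zero_def, integral_zero, mul_zero]
  rw [integral_add (hw.mul hg.sphLaplacian).integrable (hw.gradInner hg).integrable] at hzero
  exact eq_neg_of_add_eq_zero_left hzero

lemma integral_sphLaplacian (hw : ContDiffNearSphere ∞ w) :
    ∫ x, sphLaplacian w x ∂sphMeasure n = 0 := by
  simpa [gradInner, tangentDeriv_const] using
    integral_mul_sphLaplacian (ContDiffNearSphere.const 1) hw

end IntegrationByParts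

section CurvatureDimension

open scoped ContDiff

variable [NeZero n] {g : E n → ℝ}

lemma integral_hessSq (hg : ContDiffNearSphere ∞ g) : ∫ x, hessSq g x ∂sphMeasure n =
    ∫ x, sphLaplacian g x ^ 2 ∂sphMeasure n - (n - 2) * ∫ x, gradSq g x ∂sphMeasure n := by
  have hgreen := integral_mul_sphLaplacian hg.sphLaplacian hg
  have hbochner := integral_sphLaplacian hg.gradSq
  rw [integral_congr_of_eqOn_unitSphere fun x hx => sphLaplacian_gradSq hg hx,
    integral_add (((hg.gradInner hg.sphLaplacian).integrable.const_mul _).fun_add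
      (hg.gradSq.integrable.const_mul _)) (hg.hessSq.integrable.const_mul _),
    integral_add ((hg.gradInner hg.sphLaplacian).integrable.const_mul _)
      (hg.gradSq.integrable.const_mul _)] at hbochner
  simp only [integral_const_mul, gradInner_comm g (sphLaplacian g)] at hbochner
  simp only [← sq] at hgreen
  linarith

lemma integral_hessGrad_div (hg : ContDiffNearSphere ∞ g) (hpos : ∀ x ∈ unitSphere n, 0 < g x) :
    2 * ∫ x, hessGrad g x / g x ∂sphMeasure n =
      ∫ x, gradSq g x ^ 2 / g x ^ 2 ∂sphMeasure n -
        ∫ x, gradSq g x * sphLaplacian g x / g x ∂sphMeasure n := by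
  have hne : ∀ x ∈ unitSphere n, g x ≠ 0 := fun x hx => (hpos x hx).ne'
  have hinv : ContDiffNearSphere ∞ (fun x => 1 / g x) := (ContDiffNearSphere.const 1).div hg hne
  have hgrad : Set.EqOn (gradInner (fun y => gradSq g y * (1 / g y)) g)
      (fun x => 2 * (hessGrad g x / g x) - gradSq g x ^ 2 / g x ^ 2) (unitSphere n) := by
    intro x hx
    have hderiv : HasDerivAt (fun s : ℝ => 1 / s) (-(g x ^ 2)⁻¹) (g x) := by
      simpa only [one_div] using hasDerivAt_inv (hne x hx)
    rw [gradInner_mul_left (hg.gradSq.smooth_differentiableAt hx)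
        (hinv.smooth_differentiableAt hx), gradInner_gradSq_self hg hx,
      gradInner_comp_left hderiv (hg.smooth_differentiableAt hx), gradInner_self]
    ring
  have hgreen := integral_mul_sphLaplacian (hg.gradSq.mul hinv) hg
  rw [integral_congr_of_eqOn_unitSphere hgrad,
    integral_sub ((hg.hessGrad.div hg hne).integrable.const_mul _)
      ((hg.gradSq.pow 2).div (hg.pow 2) fun x hx => pow_ne_zero 2 (hne x hx)).integrable,
    integral_const_mul] at hgreen
  simp only [mul_one_div, div_mul_eq_mul_div] at hgreen
  linarith

lemma integral_trace_ineq (hg : ContDiffNearSphere ∞ g) (hpos : ∀ x ∈ unitSphere n, 0 < g x)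
    (c : ℝ) :
    ∫ x, sphLaplacian g x ^ 2 ∂sphMeasure n +
        2 * c * ∫ x, gradSq g x * sphLaplacian g x / g x ∂sphMeasure n +
        c ^ 2 * ∫ x, gradSq g x ^ 2 / g x ^ 2 ∂sphMeasure n ≤
      (n - 1) * (∫ x, hessSq g x ∂sphMeasure n + 2 * c * ∫ x, hessGrad g x / g x ∂sphMeasure n +
        c ^ 2 * ∫ x, gradSq g x ^ 2 / g x ^ 2 ∂sphMeasure n) := by
  have hne : ∀ x ∈ unitSphere n, g x ≠ 0 := fun x hx => (hpos x hx).ne'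
  have hLL := (hg.sphLaplacian.pow 2).integrable
  have hGL := ((hg.gradSq.mul hg.sphLaplacian).div hg hne).integrable.const_mul (2 * c)
  have hGG := ((hg.gradSq.pow 2).div (hg.pow 2) fun x hx =>
    pow_ne_zero 2 (hne x hx)).integrable.const_mul (c ^ 2)
  have hHG := (hg.hessGrad.div hg hne).integrable.const_mul (2 * c)
  simp only [← integral_const_mul]
  rw [← integral_add hLL hGL, ← integral_add (hLL.fun_add hGL) hGG,
    ← integral_add hg.hessSq.integrable hHG, ← integral_add (hg.hessSq.integrable.fun_add hHG) hGG,
    ← integral_const_mul]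
  refine integral_mono_ae ((hLL.fun_add hGL).add hGG)
    (((hg.hessSq.integrable.fun_add hHG).add hGG).const_mul _)
    (ae_mem_unitSphere.mono fun x hx => ?_)
  calc _ = (sphLaplacian g x + c / g x * gradSq g x) ^ 2 := by ring
    _ ≤ _ := sq_sphLaplacian_add_mul_gradSq_le hg hx (c / g x)
    _ = _ := by ring

/-- The curvature-dimension inequality in integrated form. After integration by parts the trace
inequality for `Hess g + (c / g) ∇g ⊗ ∇g` gives it for `c = -(n - 2) / (n + 1)`, at the cost of a
multiple of `∫ |∇g|⁴ / g²` which has the right sign. -/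
theorem integral_curvature_dimension (hn : 3 ≤ n) (hg : ContDiffNearSphere ∞ g)
    (hpos : ∀ x ∈ unitSphere n, 0 < g x) :
    (n - 1) * ∫ x, gradSq g x ∂sphMeasure n ≤ ∫ x, sphLaplacian g x ^ 2 ∂sphMeasure n +
      ∫ x, gradSq g x * sphLaplacian g x / g x ∂sphMeasure n := by
  have hn' : (3 : ℝ) ≤ n := by exact_mod_cast hn
  set c : ℝ := -((n - 2) / (n + 1)) with hc
  have hcn : c * (n + 1) = -(n - 2) := by rw [hc]; field_simp
  have hc0 : c ≤ 0 := neg_nonpos.2 (div_nonneg (by linarith) (by linarith))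
  have htrace := integral_trace_ineq hg hpos c
  have hparts := integral_hessGrad_div hg hpos
  have hquartic : 0 ≤ ∫ x, gradSq g x ^ 2 / g x ^ 2 ∂sphMeasure n :=
    integral_nonneg fun x => by positivity
  rw [integral_hessSq hg] at htrace
  set ILL := ∫ x, sphLaplacian g x ^ 2 ∂sphMeasure n
  set IG := ∫ x, gradSq g x ∂sphMeasure n
  set IGG := ∫ x, gradSq g x ^ 2 / g x ^ 2 ∂sphMeasure n
  set IGL := ∫ x, gradSq g x * sphLaplacian g x / g x ∂sphMeasure n
  have hsum : 0 ≤ (n - 2) * (ILL + IGL - (n - 1) * IG) + c * (n - 1 + c * (n - 2)) * IGG := by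
    linear_combination htrace + (n - 1) * c * hparts - IGL * hcn
  have hc1 : -1 ≤ c := by rw [hc, neg_le_neg_iff, div_le_one (by linarith)]; linarith
  have hneg : c * (n - 1 + c * (n - 2)) * IGG ≤ 0 :=
    mul_nonpos_of_nonpos_of_nonneg
      (mul_nonpos_of_nonpos_of_nonneg hc0 (by nlinarith [hc1])) hquartic
  have hfactor : 0 ≤ (n - 2) * (ILL + IGL - (n - 1) * IG) := by linarith
  linarith [nonneg_of_mul_nonneg_right hfactor (by linarith : (0 : ℝ) < n - 2)]

end CurvatureDimension

section Polynomials

open scoped ContDiff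

/-- The space of polynomial functions of degree at most `k` on `ℝⁿ`. -/
def polyDegreeLE (n : ℕ) : ℕ → Submodule ℝ (E n → ℝ)
  | 0 => Submodule.span ℝ {1}
  | k + 1 => polyDegreeLE n k ⊔
      ⨆ i : Fin n, (polyDegreeLE n k).map (LinearMap.mulLeft ℝ fun x : E n => x i)

variable {k : ℕ} {p : E n → ℝ}

lemma polyDegreeLE_le_succ (n k : ℕ) : polyDegreeLE n k ≤ polyDegreeLE n (k + 1) := le_sup_left

lemma coord_mul_mem_polyDegreeLE (hp : p ∈ polyDegreeLE n k) (i : Fin n) :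
    (fun x : E n => x i * p x) ∈ polyDegreeLE n (k + 1) :=
  Submodule.mem_sup_right (Submodule.mem_iSup_of_mem i ⟨p, hp, rfl⟩)

instance (k : ℕ) : FiniteDimensional ℝ (polyDegreeLE n k) := by
  induction k with
  | zero => exact FiniteDimensional.span_singleton ℝ _
  | succ k ih => rw [polyDegreeLE]; infer_instance

/-- The space of smooth functions all of whose derivatives along infinitesimal rotations belong
to `V`. -/
def smoothRotationDerivMem (V : Submodule ℝ (E n → ℝ)) : Submodule ℝ (E n → ℝ) where
  carrier := {w | ContDiff ℝ ∞ w ∧ ∀ i j, rotationDeriv i j w ∈ V}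
  add_mem' := fun {w g} ⟨hw, hwV⟩ ⟨hg, hgV⟩ => by
    refine ⟨hw.add hg, fun i j => ?_⟩
    have hadd : rotationDeriv i j (w + g) = rotationDeriv i j w + rotationDeriv i j g := by
      funext x
      simp [rotationDeriv,
        fderiv_add (hw.differentiable (by simp) x) (hg.differentiable (by simp) x)]
    exact hadd ▸ V.add_mem (hwV i j) (hgV i j)
  zero_mem' := by
    refine ⟨contDiff_const, fun i j => ?_⟩
    have hzero : rotationDeriv i j (0 : E n → ℝ) = 0 := by funext x; simp [rotationDeriv]
    rw [hzero]
    exact V.zero_mem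
  smul_mem' := fun c w ⟨hw, hwV⟩ => by
    refine ⟨contDiff_const.smul hw, fun i j => ?_⟩
    have hsmul : rotationDeriv i j (c • w) = c • rotationDeriv i j w := by
      funext x
      simp [rotationDeriv, fderiv_const_smul (hw.differentiable (by simp) x)]
    exact hsmul ▸ V.smul_mem c (hwV i j)

lemma polyDegreeLE_le_smoothRotationDerivMem (n k : ℕ) :
    polyDegreeLE n k ≤ smoothRotationDerivMem (polyDegreeLE n k) := by
  induction k with
  | zero =>
    refine Submodule.span_le.2 (Set.singleton_subset_iff.2 ⟨contDiff_const, fun i j => ?_⟩)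
    have hzero : rotationDeriv i j (1 : E n → ℝ) = 0 := by funext x; simp [rotationDeriv]
    exact hzero ▸ Submodule.zero_mem _
  | succ k ih =>
    refine sup_le (fun w hw => ⟨(ih hw).1, fun i j => polyDegreeLE_le_succ n k ((ih hw).2 i j)⟩)
      (iSup_le fun l => ?_)
    rintro _ ⟨p, hp, rfl⟩
    obtain ⟨hsmooth, hmem⟩ := ih hp
    refine ⟨(contDiff_coord l).mul hsmooth, fun i j => ?_⟩
    have hleibniz : rotationDeriv i j (fun x : E n => x l * p x) =
        (fun x : E n => x l * rotationDeriv i j p x) +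
          ((if l = j then (1 : ℝ) else 0) • (fun x : E n => x i * p x) -
            (if l = i then (1 : ℝ) else 0) • (fun x : E n => x j * p x)) := by
      funext x
      rw [rotationDeriv_coord_mul i j l (hsmooth.differentiable (by simp) x)]
      simp only [rotationField, PiLp.sub_apply, PiLp.smul_apply, PiLp.single_apply, smul_eq_mul,
        Pi.add_apply, Pi.sub_apply, Pi.smul_apply]
      ring
    change rotationDeriv i j (fun x : E n => x l * p x) ∈ polyDegreeLE n (k + 1)
    rw [hleibniz]
    exact Submodule.add_mem _ (coord_mul_mem_polyDegreeLE (hmem i j) l) (Submodule.sub_mem _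
      (Submodule.smul_mem _ _ (coord_mul_mem_polyDegreeLE hp i))
      (Submodule.smul_mem _ _ (coord_mul_mem_polyDegreeLE hp j)))

lemma contDiff_of_mem_polyDegreeLE (hp : p ∈ polyDegreeLE n k) : ContDiff ℝ ∞ p :=
  (polyDegreeLE_le_smoothRotationDerivMem n k hp).1

lemma rotationDeriv_mem_polyDegreeLE (hp : p ∈ polyDegreeLE n k) (i j : Fin n) :
    rotationDeriv i j p ∈ polyDegreeLE n k :=
  (polyDegreeLE_le_smoothRotationDerivMem n k hp).2 i j

lemma contDiffNearSphere_of_mem_polyDegreeLE (hp : p ∈ polyDegreeLE n k) :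
    ContDiffNearSphere ∞ p :=
  fun _ _ => (contDiff_of_mem_polyDegreeLE hp).contDiffAt

-- `sphLaplacian p` itself is a polynomial of higher degree.
lemma exists_mem_polyDegreeLE_eqOn_sphLaplacian (hp : p ∈ polyDegreeLE n k) :
    ∃ q ∈ polyDegreeLE n k, Set.EqOn (sphLaplacian p) q (unitSphere n) := by
  refine ⟨(1 / 2 : ℝ) • ∑ j, ∑ i, rotationDeriv i j (rotationDeriv i j p),
    Submodule.smul_mem _ _ (Submodule.sum_mem _ fun j _ => Submodule.sum_mem _ fun i _ =>
      rotationDeriv_mem_polyDegreeLE (rotationDeriv_mem_polyDegreeLE hp i j) i j), fun x hx => ?_⟩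
  have hsum := sum_rotationDeriv_rotationDeriv (contDiffNearSphere_of_mem_polyDegreeLE hp) hx
  simp [Finset.sum_apply, hsum]

end Polynomials

section HeatFlow

open scoped ContDiff

local notation "𝒟" => tangentDeriv

/-- A family `u t` of smooth functions solving the heat equation on the sphere, regular enough to
differentiate `u t` and its gradient in `t` under integrals over the sphere. -/
structure IsHeatFlow (u : ℝ → E n → ℝ) : Prop where
  smooth : ∀ t, ContDiffNearSphere ∞ (u t)
  hasDerivAt : ∀ t, ∀ x ∈ unitSphere n, HasDerivAt (fun t => u t x) (sphLaplacian (u t) x) t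
  hasDerivAt_tangentDeriv : ∀ i t, ∀ x ∈ unitSphere n,
    HasDerivAt (fun t => 𝒟 i (u t) x) (𝒟 i (sphLaplacian (u t)) x) t
  continuousOn : ContinuousOn (fun q : ℝ × E n => u q.1 q.2) (Set.univ ×ˢ unitSphere n)
  continuousOn_tangentDeriv : ∀ i,
    ContinuousOn (fun q : ℝ × E n => 𝒟 i (u q.1) q.2) (Set.univ ×ˢ unitSphere n)
  continuousOn_sphLaplacian :
    ContinuousOn (fun q : ℝ × E n => sphLaplacian (u q.1) q.2) (Set.univ ×ˢ unitSphere n)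
  continuousOn_tangentDeriv_sphLaplacian : ∀ i,
    ContinuousOn (fun q : ℝ × E n => 𝒟 i (sphLaplacian (u q.1)) q.2) (Set.univ ×ˢ unitSphere n)

lemma exists_hasDerivAt_clm_apply {F : Type*} [NormedAddCommGroup F] [NormedSpace ℝ F]
    [CompleteSpace F] (A : F →L[ℝ] F) (a : F) :
    ∃ c : ℝ → F, c 0 = a ∧ ∀ t, HasDerivAt c (A (c t)) t := by
  refine ⟨fun t => NormedSpace.exp (t • A) a, by simp, fun t => ?_⟩
  simpa using (hasDerivAt_exp_smul_const' (𝕂 := ℝ) A t).clm_apply (hasDerivAt_const t a)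

variable {ι : Type*} [Fintype ι] {b : ι → E n → ℝ} {x : E n}

lemma ContDiffNearSphere.linearCombination (hb : ∀ l, ContDiffNearSphere ∞ (b l)) (v : ι → ℝ) :
    ContDiffNearSphere ∞ (fun y => ∑ l, v l * b l y) :=
  .sum fun l _ => (ContDiffNearSphere.const (v l)).mul (hb l)

lemma tangentDeriv_linearCombination (hb : ∀ l, ContDiffNearSphere ∞ (b l)) (v : ι → ℝ)
    (hx : x ∈ unitSphere n) (i : Fin n) :
    𝒟 i (fun y => ∑ l, v l * b l y) x = ∑ l, v l * 𝒟 i (b l) x := by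
  rw [tangentDeriv_sum _ fun l _ =>
    ((ContDiffNearSphere.const (v l)).mul (hb l)).smooth_differentiableAt hx]
  exact Finset.sum_congr rfl fun l _ =>
    tangentDeriv_const_mul _ ((hb l).smooth_differentiableAt hx)

lemma sphLaplacian_linearCombination (hb : ∀ l, ContDiffNearSphere ∞ (b l)) (v : ι → ℝ)
    (hx : x ∈ unitSphere n) :
    sphLaplacian (fun y => ∑ l, v l * b l y) x = ∑ l, v l * sphLaplacian (b l) x := by
  rw [sphLaplacian_sum (fun l _ => (ContDiffNearSphere.const (v l)).mul (hb l)) hx]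
  exact Finset.sum_congr rfl fun l _ => sphLaplacian_const_mul _ (hb l) hx

lemma sphLaplacian_linearCombination_of_matrix (hb : ∀ l, ContDiffNearSphere ∞ (b l))
    {T : Matrix ι ι ℝ}
    (hT : ∀ l, Set.EqOn (sphLaplacian (b l)) (fun x => ∑ m, T l m * b m x) (unitSphere n))
    (v : ι → ℝ) : Set.EqOn (sphLaplacian fun y => ∑ l, v l * b l y)
      (fun x => ∑ m, T.vecMulLinear v m * b m x) (unitSphere n) := fun x hx => by
  simp only [sphLaplacian_linearCombination hb _ hx, hT _ hx, Matrix.vecMulLinear_apply,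
    Matrix.vecMul, dotProduct, Finset.mul_sum, Finset.sum_mul, mul_assoc]
  exact Finset.sum_comm

lemma continuousOn_linearCombination {c : ℝ → ι → ℝ} (hc : Continuous c)
    (hb : ∀ l, ContinuousOn (b l) (unitSphere n)) :
    ContinuousOn (fun q : ℝ × E n => ∑ l, c q.1 l * b l q.2) (Set.univ ×ˢ unitSphere n) :=
  continuousOn_finsetSum _ fun l _ =>
    (((continuous_apply l).comp hc).comp continuous_fst).continuousOn.mul
      ((hb l).comp continuousOn_snd fun _ hq => hq.2)

lemma exists_isHeatFlow_linearCombination (hb : ∀ l, ContDiffNearSphere ∞ (b l))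
    {T : Matrix ι ι ℝ}
    (hT : ∀ l, Set.EqOn (sphLaplacian (b l)) (fun x => ∑ m, T l m * b m x) (unitSphere n))
    (a : ι → ℝ) : ∃ u : ℝ → E n → ℝ, IsHeatFlow u ∧ u 0 = fun x => ∑ l, a l * b l x := by
  let A : (ι → ℝ) →L[ℝ] (ι → ℝ) := T.vecMulLinear.toContinuousLinearMap
  obtain ⟨c, hc0, hc⟩ := exists_hasDerivAt_clm_apply A a
  have hcont : Continuous c := continuous_iff_continuousAt.2 fun t => (hc t).continuousAt
  have hcoef : ∀ t l, HasDerivAt (fun t => c t l) (A (c t) l) t := fun t l =>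
    hasDerivAt_pi.1 (hc t) l
  have hsmooth := ContDiffNearSphere.linearCombination hb
  have hlap : ∀ t, Set.EqOn (sphLaplacian fun y => ∑ l, c t l * b l y)
      (fun x => ∑ m, A (c t) m * b m x) (unitSphere n) := fun t =>
    sphLaplacian_linearCombination_of_matrix hb hT (c t)
  have hgradlap : ∀ i t, ∀ x ∈ unitSphere n,
      𝒟 i (sphLaplacian fun y => ∑ l, c t l * b l y) x = ∑ m, A (c t) m * 𝒟 i (b m) x :=
    fun i t x hx => by
      rw [tangentDeriv_congr_of_eqOn ((hsmooth _).sphLaplacian.smooth_differentiableAt hx)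
        ((hsmooth _).smooth_differentiableAt hx) hx (hlap t),
        tangentDeriv_linearCombination hb _ hx]
  refine ⟨fun t y => ∑ l, c t l * b l y, ⟨fun t => hsmooth _, fun t x hx => ?_, fun i t x hx => ?_,
    continuousOn_linearCombination hcont fun l => (hb l).continuousOn, fun i => ?_, ?_,
    fun i => ?_⟩, by simp only [hc0]⟩
  · rw [hlap t hx]
    exact HasDerivAt.fun_sum fun l _ => (hcoef t l).mul_const _
  · simp only [hgradlap i t x hx, tangentDeriv_linearCombination hb _ hx]
    exact HasDerivAt.fun_sum fun l _ => (hcoef t l).mul_const _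
  · exact (continuousOn_linearCombination hcont fun l => (hb l).tangentDeriv.continuousOn).congr
      fun q hq => tangentDeriv_linearCombination hb _ hq.2 i
  · exact (continuousOn_linearCombination (A.continuous.comp hcont) fun l =>
      (hb l).continuousOn).congr fun q hq => hlap _ hq.2
  · exact (continuousOn_linearCombination (A.continuous.comp hcont) fun l =>
      (hb l).tangentDeriv.continuousOn).congr fun q hq => hgradlap _ _ _ hq.2

lemma exists_isHeatFlow_of_mem_polyDegreeLE {k : ℕ} {p : E n → ℝ} (hp : p ∈ polyDegreeLE n k) :
    ∃ u : ℝ → E n → ℝ, IsHeatFlow u ∧ u 0 = p := by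
  let B := Module.finBasis ℝ (polyDegreeLE n k)
  have hrepr : ∀ q ∈ polyDegreeLE n k, ∃ a : _ → ℝ, q = fun x => ∑ l, a l * (B l : E n → ℝ) x := by
    refine fun q hq => ⟨B.repr ⟨q, hq⟩, funext fun x => ?_⟩
    have hsum := congrFun (congrArg Subtype.val (B.sum_repr ⟨q, hq⟩)) x
    rw [Submodule.coe_sum, Finset.sum_apply] at hsum
    exact hsum.symm
  have hlap : ∀ l, ∃ a : _ → ℝ, Set.EqOn (sphLaplacian (B l : E n → ℝ))
      (fun x => ∑ m, a m * (B m : E n → ℝ) x) (unitSphere n) := fun l => by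
    obtain ⟨q, hq, heq⟩ := exists_mem_polyDegreeLE_eqOn_sphLaplacian (B l).2
    obtain ⟨a, rfl⟩ := hrepr q hq
    exact ⟨a, heq⟩
  choose T hT using hlap
  obtain ⟨a, rfl⟩ := hrepr p hp
  exact exists_isHeatFlow_linearCombination
    (fun l => contDiffNearSphere_of_mem_polyDegreeLE (B l).2) hT a

end HeatFlow

section MaximumPrinciple

open scoped ContDiff Topology

variable {w : E n → ℝ} {x : E n}

lemma rotationDeriv_rotationDeriv_nonpos_of_isMaxOn (hw : ContDiffNearSphere ∞ w)
    (hx : x ∈ unitSphere n) (hmax : IsMaxOn w (unitSphere n) x) (i j : Fin n) :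
    rotationDeriv i j (rotationDeriv i j w) x ≤ 0 := by
  rcases eq_or_ne i j with rfl | hij
  · exact (rotationDeriv_self _ _ _).le
  by_contra! hpos
  let φ : ℝ → ℝ := fun s => w (rotate i j s x)
  have hφ : ∀ s, HasDerivAt φ (rotationDeriv i j w (rotate i j s x)) s := fun s =>
    hasDerivAt_comp_rotate hij (hw.smooth_differentiableAt (rotate_mem_unitSphere hij s hx))
  have hsecond : deriv (deriv φ) 0 = rotationDeriv i j (rotationDeriv i j w) x := by
    rw [funext fun s => (hφ s).deriv, (hasDerivAt_comp_rotate hij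
      ((hw.rotationDeriv i j).smooth_differentiableAt (rotate_mem_unitSphere hij 0 hx))).deriv,
      rotate_zero]
  have hlocmax : IsLocalMax φ 0 := Eventually.of_forall fun s => by
    simpa only [φ, rotate_zero, Set.mem_ofPred_eq] using hmax (rotate_mem_unitSphere hij s hx)
  have hlocmin : IsLocalMin φ 0 := isLocalMin_of_deriv_deriv_pos (by rwa [hsecond])
    hlocmax.deriv_eq_zero (hφ 0).continuousAt
  have hconst : φ =ᶠ[𝓝 0] fun _ => φ 0 := by
    filter_upwards [hlocmax, hlocmin] with s hle hge using le_antisymm hle hge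
  have hzero := hconst.deriv.deriv_eq
  rw [hsecond, deriv_const', deriv_const] at hzero
  exact hpos.ne' hzero

lemma sphLaplacian_nonpos_of_isMaxOn (hw : ContDiffNearSphere ∞ w) (hx : x ∈ unitSphere n)
    (hmax : IsMaxOn w (unitSphere n) x) : sphLaplacian w x ≤ 0 := by
  have hsum := sum_rotationDeriv_rotationDeriv hw hx
  have hle : ∑ j, ∑ i, rotationDeriv i j (rotationDeriv i j w) x ≤ 0 :=
    Finset.sum_nonpos fun j _ => Finset.sum_nonpos fun i _ =>
      rotationDeriv_rotationDeriv_nonpos_of_isMaxOn hw hx hmax i j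
  linarith

lemma nonneg_of_hasDerivAt_of_eventually_le_left {φ : ℝ → ℝ} {a t : ℝ} (hφ : HasDerivAt φ a t)
    (hle : ∀ᶠ s in 𝓝[<] t, φ s ≤ φ t) : 0 ≤ a := by
  have hslope := (hasDerivWithinAt_iff_tendsto_slope' Set.self_notMem_Iio).1
    (hφ.hasDerivWithinAt (s := Set.Iio t))
  refine ge_of_tendsto hslope ?_
  filter_upwards [hle, self_mem_nhdsWithin] with s hs hst
  rw [slope_def_field]
  exact div_nonneg_of_nonpos (sub_nonpos.2 hs) (sub_nonpos.2 (le_of_lt hst))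

theorem le_of_hasDerivAt_le_sphLaplacian {v v' : ℝ → E n → ℝ}
    (hsmooth : ∀ t, ContDiffNearSphere ∞ (v t))
    (hcont : ContinuousOn (fun q : ℝ × E n => v q.1 q.2) (Set.univ ×ˢ unitSphere n))
    (hderiv : ∀ t, ∀ x ∈ unitSphere n, HasDerivAt (fun t => v t x) (v' t x) t)
    (hsub : ∀ t, ∀ x ∈ unitSphere n, v' t x ≤ sphLaplacian (v t) x) {M T : ℝ}
    (h0 : ∀ x ∈ unitSphere n, v 0 x ≤ M) (hT : 0 ≤ T) (hx : x ∈ unitSphere n) : v T x ≤ M := by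
  refine le_of_forall_pos_le_add fun δ hδ => ?_
  obtain ⟨ε, hε, hεT⟩ : ∃ ε > 0, ε * T ≤ δ :=
    ⟨δ / (T + 1), by positivity, by
      rw [div_mul_eq_mul_div, div_le_iff₀ (by linarith)]; nlinarith⟩
  have hpenalized : ContinuousOn (fun q : ℝ × E n => v q.1 q.2 - ε * q.1)
      (Set.Icc 0 T ×ˢ unitSphere n) :=
    (hcont.mono (Set.prod_mono_left (Set.subset_univ _))).sub
      (continuous_const.mul continuous_fst).continuousOn
  obtain ⟨⟨t₀, x₀⟩, ⟨ht₀, hx₀⟩, hmax⟩ := (isCompact_Icc.prod (isCompact_sphere _ _)).exists_isMaxOn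
    ⟨(T, x), ⟨⟨hT, le_rfl⟩, hx⟩⟩ hpenalized
  have hle : ∀ t ∈ Set.Icc 0 T, ∀ y ∈ unitSphere n, v t y - ε * t ≤ v t₀ x₀ - ε * t₀ :=
    fun t ht y hy => hmax (Set.mk_mem_prod ht hy)
  obtain rfl : t₀ = 0 := by
    by_contra hne
    have ht₀pos : 0 < t₀ := lt_of_le_of_ne ht₀.1 (Ne.symm hne)
    have htime : 0 ≤ v' t₀ x₀ - ε := by
      refine nonneg_of_hasDerivAt_of_eventually_le_left (φ := fun t => v t x₀ - ε * t) (t := t₀)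
        (by simpa using (hderiv t₀ x₀ hx₀).fun_sub ((hasDerivAt_id' t₀).const_mul ε)) ?_
      filter_upwards [Ioo_mem_nhdsLT ht₀pos] with s hs
      exact hle s ⟨hs.1.le, hs.2.le.trans ht₀.2⟩ x₀ hx₀
    have hspace := sphLaplacian_nonpos_of_isMaxOn (hsmooth t₀) hx₀ fun y hy =>
      (sub_le_sub_iff_right _).1 (hle t₀ ht₀ y hy)
    linarith [hsub t₀ x₀ hx₀]
  linarith [hle T ⟨hT, le_rfl⟩ x hx, h0 x₀ hx₀]

namespace IsHeatFlow

variable {u : ℝ → E n → ℝ} {M T : ℝ}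

lemma le_of_le_zero (hu : IsHeatFlow u) (h0 : ∀ x ∈ unitSphere n, M ≤ u 0 x) (hT : 0 ≤ T)
    (hx : x ∈ unitSphere n) : M ≤ u T x := by
  have hneg := le_of_hasDerivAt_le_sphLaplacian (v := fun t x => -1 * u t x)
    (v' := fun t x => -1 * sphLaplacian (u t) x) (M := -M)
    (fun t => (ContDiffNearSphere.const _).mul (hu.smooth t))
    (continuousOn_const.mul hu.continuousOn) (fun t x hx => (hu.hasDerivAt t x hx).const_mul _)
    (fun t x hx => (sphLaplacian_const_mul _ (hu.smooth t) hx).ge)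
    (fun x hx => by linarith [h0 x hx]) hT hx
  linarith

lemma hasDerivAt_gradSq (hu : IsHeatFlow u) (t : ℝ) (hx : x ∈ unitSphere n) :
    HasDerivAt (fun t => gradSq (u t) x) (2 * gradInner (u t) (sphLaplacian (u t)) x) t := by
  simp only [gradSq, gradInner, Finset.mul_sum, ← mul_assoc]
  exact HasDerivAt.fun_sum fun i _ => by simpa using (hu.hasDerivAt_tangentDeriv i t x hx).fun_pow 2

lemma continuousOn_gradSq (hu : IsHeatFlow u) :
    ContinuousOn (fun q : ℝ × E n => gradSq (u q.1) q.2) (Set.univ ×ˢ unitSphere n) :=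
  continuousOn_finsetSum _ fun i _ => (hu.continuousOn_tangentDeriv i).pow 2

lemma continuousOn_gradInner_sphLaplacian (hu : IsHeatFlow u) :
    ContinuousOn (fun q : ℝ × E n => gradInner (u q.1) (sphLaplacian (u q.1)) q.2)
      (Set.univ ×ˢ unitSphere n) :=
  continuousOn_finsetSum _ fun i _ =>
    (hu.continuousOn_tangentDeriv i).mul (hu.continuousOn_tangentDeriv_sphLaplacian i)

-- By Bochner's formula, `exp (2 * (n - 2) * t) * gradSq (u t)` is a subsolution.
lemma gradSq_le (hu : IsHeatFlow u) (h0 : ∀ x ∈ unitSphere n, gradSq (u 0) x ≤ M) (hT : 0 ≤ T)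
    (hx : x ∈ unitSphere n) : gradSq (u T) x ≤ Real.exp (-(2 * (n - 2) * T)) * M := by
  have hexp : ∀ t : ℝ, HasDerivAt (fun t : ℝ => Real.exp (2 * (n - 2) * t))
      (Real.exp (2 * (n - 2) * t) * (2 * (n - 2))) t := fun t => by
    simpa using ((hasDerivAt_id t).const_mul (2 * ((n : ℝ) - 2))).exp
  have hexp_cont : Continuous fun q : ℝ × E n => Real.exp (2 * (n - 2) * q.1) := by fun_prop
  have hgrowth := le_of_hasDerivAt_le_sphLaplacian
    (fun t => (ContDiffNearSphere.const (Real.exp (2 * (n - 2) * t))).mul (hu.smooth t).gradSq)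
    (hexp_cont.continuousOn.mul hu.continuousOn_gradSq)
    (fun t x hx => (hexp t).fun_mul (hu.hasDerivAt_gradSq t hx))
    (fun t x hx => by
      rw [sphLaplacian_const_mul _ (hu.smooth t).gradSq hx, sphLaplacian_gradSq (hu.smooth t) hx,
        mul_assoc, ← mul_add]
      exact mul_le_mul_of_nonneg_left (by linarith [hessSq_nonneg (u t) x]) (Real.exp_pos _).le)
    (fun x hx => by simpa using h0 x hx) hT hx
  rwa [Real.exp_neg, inv_mul_eq_div, le_div_iff₀' (Real.exp_pos _)]

end IsHeatFlow

end MaximumPrinciple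

section Oscillation

variable {w : E n → ℝ} {x y : E n}

lemma exists_norm_eq_one_inner_eq_zero (hn : 2 ≤ n) (x : E n) :
    ∃ v : E n, ‖v‖ = 1 ∧ ⟪x, v⟫ = 0 := by
  have hbot : (Submodule.span ℝ {x})ᗮ ≠ ⊥ := by
    rw [Ne, Submodule.orthogonal_eq_bot_iff]
    intro htop
    have hcard := finrank_span_le_card (R := ℝ) ({x} : Set (E n))
    rw [htop, finrank_top, finrank_euclideanSpace_fin, Set.toFinset_singleton,
      Finset.card_singleton] at hcard
    omega
  obtain ⟨v, hv, hv0⟩ := Submodule.exists_mem_ne_zero_of_ne_bot hbot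
  refine ⟨‖v‖⁻¹ • v, norm_smul_inv_norm hv0, ?_⟩
  rw [inner_smul_right, Submodule.mem_orthogonal_singleton_iff_inner_right.1 hv, mul_zero]

lemma exists_eq_cos_smul_add_sin_smul (hn : 2 ≤ n) (hx : x ∈ unitSphere n)
    (hy : y ∈ unitSphere n) : ∃ v : E n, ‖v‖ = 1 ∧ ⟪x, v⟫ = 0 ∧
      ∃ θ ∈ Set.Icc 0 Real.pi, y = Real.cos θ • x + Real.sin θ • v := by
  rw [mem_sphere_zero_iff_norm] at hx hy
  set c := ⟪x, y⟫ with hc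
  have hc1 : |c| ≤ 1 := by simpa only [hx, hy, mul_one] using abs_real_inner_le_norm x y
  have hcos := Real.cos_arccos (abs_le.1 hc1).1 (abs_le.1 hc1).2
  have hnorm : ‖y - c • x‖ ^ 2 = 1 - c ^ 2 := by
    rw [norm_sub_sq_real, inner_smul_right, real_inner_comm, ← hc, norm_smul, hx, hy,
      Real.norm_eq_abs, mul_one, sq_abs]
    ring
  have hsin : Real.sin (Real.arccos c) = ‖y - c • x‖ := by
    rw [Real.sin_arccos, ← hnorm, Real.sqrt_sq (norm_nonneg _)]
  have hθ : Real.arccos c ∈ Set.Icc 0 Real.pi := ⟨Real.arccos_nonneg _, Real.arccos_le_pi _⟩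
  by_cases h0 : y - c • x = 0
  · obtain ⟨v, hv, hxv⟩ := exists_norm_eq_one_inner_eq_zero hn x
    refine ⟨v, hv, hxv, _, hθ, ?_⟩
    rw [hsin, hcos, h0, norm_zero, zero_smul, add_zero]
    exact sub_eq_zero.1 h0
  · refine ⟨‖y - c • x‖⁻¹ • (y - c • x), norm_smul_inv_norm h0, ?_, _, hθ, ?_⟩
    · rw [inner_smul_right, inner_sub_right, inner_smul_right, ← hc, real_inner_self_eq_norm_sq, hx]
      ring
    · rw [hsin, hcos, smul_inv_smul₀ (norm_ne_zero_iff.2 h0), add_sub_cancel]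

lemma fderiv_eq_sum_mul_tangentDeriv {v : E n} (hv : ⟪x, v⟫ = 0) (w : E n → ℝ) :
    fderiv ℝ w x v = ∑ i, v i * tangentDeriv i w x := by
  have hsum : v = ∑ i, v i • tangentVec i x := by
    have hxv : ∑ i, v i * x i = 0 := by simpa [PiLp.inner_apply] using hv
    ext k
    simp [mul_sub, ← mul_assoc, ← Finset.sum_mul, hxv]
  conv_lhs => rw [hsum]
  simp [tangentDeriv]

lemma sq_fderiv_le_mul_gradSq {v : E n} (hv : ⟪x, v⟫ = 0) (w : E n → ℝ) :
    fderiv ℝ w x v ^ 2 ≤ ‖v‖ ^ 2 * gradSq w x := by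
  rw [fderiv_eq_sum_mul_tangentDeriv hv, EuclideanSpace.real_norm_sq_eq]
  exact Finset.sum_mul_sq_le_sq_mul_sq _ _ _

-- The great circle from `x` to `y` has length at most `π`.
lemma sub_le_mul_pi_of_gradSq_le (hn : 2 ≤ n) (hw : ContDiffNearSphere 1 w) {K : ℝ} (hK : 0 ≤ K)
    (hgrad : ∀ x ∈ unitSphere n, gradSq w x ≤ K ^ 2) (hx : x ∈ unitSphere n)
    (hy : y ∈ unitSphere n) : w y - w x ≤ K * Real.pi := by
  obtain ⟨v, hv, hxv, θ, hθ, rfl⟩ := exists_eq_cos_smul_add_sin_smul hn hx hy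
  rw [mem_sphere_zero_iff_norm] at hx
  let γ : ℝ → E n := fun s => Real.cos s • x + Real.sin s • v
  let γ' : ℝ → E n := fun s => -Real.sin s • x + Real.cos s • v
  have hγ : ∀ s, HasDerivAt γ (γ' s) s := fun s =>
    ((Real.hasDerivAt_cos s).smul_const x).add ((Real.hasDerivAt_sin s).smul_const v)
  have hinner : ∀ a b c d : ℝ, ⟪a • x + b • v, c • x + d • v⟫ = a * c + b * d := fun a b c d => by
    have hvx : ⟪v, x⟫ = 0 := by rw [real_inner_comm, hxv]
    simp [inner_add_left, inner_add_right, inner_smul_left, inner_smul_right, hxv, hvx, hx, hv]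
    ring
  have hγ_mem : ∀ s, γ s ∈ unitSphere n := fun s => by
    rw [mem_sphere_zero_iff_norm, ← pow_eq_one_iff_of_nonneg (norm_nonneg _) two_ne_zero,
      ← real_inner_self_eq_norm_sq, hinner]
    linarith [Real.sin_sq_add_cos_sq s]
  have hγ'_norm : ∀ s, ‖γ' s‖ ^ 2 = 1 := fun s => by
    rw [← real_inner_self_eq_norm_sq, hinner]
    linarith [Real.sin_sq_add_cos_sq s]
  have horth : ∀ s, ⟪γ s, γ' s⟫ = 0 := fun s => by rw [hinner]; ring
  have hderiv : ∀ s, HasDerivAt (fun s => w (γ s)) (fderiv ℝ w (γ s) (γ' s)) s := fun s =>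
    (hw.differentiableAt one_ne_zero (hγ_mem s)).hasFDerivAt.comp_hasDerivAt s (hγ s)
  have hbound : ∀ s, ‖fderiv ℝ w (γ s) (γ' s)‖ ≤ K := fun s => by
    refine abs_le_of_sq_le_sq ((sq_fderiv_le_mul_gradSq (horth s) w).trans ?_) hK
    rw [hγ'_norm, one_mul]
    exact hgrad _ (hγ_mem s)
  have hlip := (convex_univ (𝕜 := ℝ)).norm_image_sub_le_of_norm_hasDerivWithin_le (x := 0) (y := θ)
    (fun s _ => (hderiv s).hasDerivWithinAt) (fun s _ => hbound s) trivial trivial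
  simp only [γ, Real.cos_zero, Real.sin_zero, one_smul, zero_smul, add_zero, sub_zero,
    Real.norm_eq_abs, abs_of_nonneg hθ.1] at hlip
  exact (le_abs_self _).trans (hlip.trans (mul_le_mul_of_nonneg_left hθ.2 hK))

end Oscillation

/-- The entropy `Ent_μ(w)` of a positive function with respect to a probability measure. -/
def entropy {α : Type*} [MeasurableSpace α] (μ : Measure α) (w : α → ℝ) : ℝ :=
  ∫ x, w x * Real.log (w x) ∂μ - (∫ x, w x ∂μ) * Real.log (∫ x, w x ∂μ)

/-- The Fisher information of a positive density on the sphere, which is minus the derivative of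
the entropy along the heat flow. -/
def fisherInformation (w : E n → ℝ) : ℝ :=
  ∫ x, gradSq w x / w x ∂sphMeasure n

section FisherInformation

open scoped ContDiff

variable {w : E n → ℝ} {x : E n}

lemma fisherInformation_nonneg (hpos : ∀ x ∈ unitSphere n, 0 < w x) : 0 ≤ fisherInformation w :=
  integral_nonneg_of_ae <| ae_mem_unitSphere.mono fun x hx =>
    div_nonneg (gradSq_nonneg w x) (hpos x hx).le

section SquareRoot

variable {g v : E n → ℝ}

lemma tangentDeriv_eq_of_eqOn_sq (hg : ContDiffNearSphere ∞ g) (hw : ContDiffNearSphere ∞ w)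
    (hwg : Set.EqOn w (fun x => g x ^ 2) (unitSphere n)) (hx : x ∈ unitSphere n) (i : Fin n) :
    tangentDeriv i w x = 2 * g x * tangentDeriv i g x := by
  have hg_diff := hg.smooth_differentiableAt hx
  rw [tangentDeriv_congr_of_eqOn (hw.smooth_differentiableAt hx) (hg_diff.fun_pow 2) hx hwg,
    tangentDeriv_comp (hasDerivAt_pow 2 _) hg_diff]
  simp

lemma gradInner_eq_of_eqOn_sq (hg : ContDiffNearSphere ∞ g) (hw : ContDiffNearSphere ∞ w)
    (hwg : Set.EqOn w (fun x => g x ^ 2) (unitSphere n)) (hx : x ∈ unitSphere n) :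
    gradInner w v x = 2 * g x * gradInner g v x := by
  simp only [gradInner, tangentDeriv_eq_of_eqOn_sq hg hw hwg hx, Finset.mul_sum, mul_assoc]

lemma gradSq_eq_of_eqOn_sq (hg : ContDiffNearSphere ∞ g) (hw : ContDiffNearSphere ∞ w)
    (hwg : Set.EqOn w (fun x => g x ^ 2) (unitSphere n)) (hx : x ∈ unitSphere n) :
    gradSq w x = 4 * g x ^ 2 * gradSq g x := by
  rw [← gradInner_self, gradInner_eq_of_eqOn_sq hg hw hwg hx, gradInner_comm,
    gradInner_eq_of_eqOn_sq hg hw hwg hx, gradInner_self]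
  ring

lemma sphLaplacian_eq_of_eqOn_sq (hg : ContDiffNearSphere ∞ g) (hw : ContDiffNearSphere ∞ w)
    (hwg : Set.EqOn w (fun x => g x ^ 2) (unitSphere n)) (hx : x ∈ unitSphere n) :
    sphLaplacian w x = 2 * g x * sphLaplacian g x + 2 * gradSq g x := by
  rw [sphLaplacian_congr_of_eqOn hw (hg.mul hg) (fun y hy => (hwg hy).trans (sq _)) hx,
    sphLaplacian_mul hg hg hx, gradInner_self]
  ring

lemma fisherInformation_eq_of_eqOn_sq (hg : ContDiffNearSphere ∞ g) (hw : ContDiffNearSphere ∞ w)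
    (hwg : Set.EqOn w (fun x => g x ^ 2) (unitSphere n))
    (hg0 : ∀ x ∈ unitSphere n, g x ≠ 0) :
    fisherInformation w = 4 * ∫ x, gradSq g x ∂sphMeasure n := by
  rw [← integral_const_mul]
  refine integral_congr_of_eqOn_unitSphere fun x hx => ?_
  have hne := hg0 x hx
  simp only [gradSq_eq_of_eqOn_sq hg hw hwg hx, hwg hx]
  field_simp

-- Green's formula for `g` and `sphLaplacian w / g`.
lemma integral_dissipation_eq_of_eqOn_sq [NeZero n] (hg : ContDiffNearSphere ∞ g)
    (hw : ContDiffNearSphere ∞ w) (hwg : Set.EqOn w (fun x => g x ^ 2) (unitSphere n))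
    (hg0 : ∀ x ∈ unitSphere n, g x ≠ 0) :
    ∫ x, (2 * gradInner w (sphLaplacian w) x / w x - gradSq w x * sphLaplacian w x / w x ^ 2)
        ∂sphMeasure n =
      -(8 * (∫ x, sphLaplacian g x ^ 2 ∂sphMeasure n +
        ∫ x, gradSq g x * sphLaplacian g x / g x ∂sphMeasure n)) := by
  have hinv : ContDiffNearSphere ∞ fun y => (g y)⁻¹ := fun x hx => (hg x hx).inv (hg0 x hx)
  have hgreen := integral_mul_sphLaplacian (hw.sphLaplacian.mul hinv) hg
  have hlhs : ∫ x, sphLaplacian w x * (g x)⁻¹ * sphLaplacian g x ∂sphMeasure n =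
      2 * (∫ x, sphLaplacian g x ^ 2 ∂sphMeasure n +
        ∫ x, gradSq g x * sphLaplacian g x / g x ∂sphMeasure n) := by
    rw [← integral_add (hg.sphLaplacian.pow 2).integrable
      ((hg.gradSq.mul hg.sphLaplacian).div hg hg0).integrable, ← integral_const_mul]
    refine integral_congr_of_eqOn_unitSphere fun x hx => ?_
    have hne := hg0 x hx
    simp only [sphLaplacian_eq_of_eqOn_sq hg hw hwg hx]
    field_simp
  have hrhs : ∫ x, (2 * gradInner w (sphLaplacian w) x / w x -
      gradSq w x * sphLaplacian w x / w x ^ 2) ∂sphMeasure n =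
      4 * ∫ x, gradInner (fun y => sphLaplacian w y * (g y)⁻¹) g x ∂sphMeasure n := by
    rw [← integral_const_mul]
    refine integral_congr_of_eqOn_unitSphere fun x hx => ?_
    have hne := hg0 x hx
    simp only [gradInner_mul_left (hw.sphLaplacian.smooth_differentiableAt hx)
      (hinv.smooth_differentiableAt hx), gradInner_comp_left (hasDerivAt_inv hne)
      (hg.smooth_differentiableAt hx), gradInner_self, gradInner_eq_of_eqOn_sq hg hw hwg hx,
      gradSq_eq_of_eqOn_sq hg hw hwg hx, hwg hx, gradInner_comm (sphLaplacian w) g]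
    field_simp
    ring
  linarith

end SquareRoot

lemma fisherInformation_le_dissipation (hn : 3 ≤ n) (hw : ContDiffNearSphere ∞ w)
    (hpos : ∀ x ∈ unitSphere n, 0 < w x) :
    2 * (n - 1) * fisherInformation w ≤ -∫ x, (2 * gradInner w (sphLaplacian w) x / w x -
      gradSq w x * sphLaplacian w x / w x ^ 2) ∂sphMeasure n := by
  have : NeZero n := ⟨by omega⟩
  have hg := hw.sqrt hpos
  have hwg : Set.EqOn w (fun x => √(w x) ^ 2) (unitSphere n) := fun x hx =>
    (Real.sq_sqrt (hpos x hx).le).symm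
  have hg0 : ∀ x ∈ unitSphere n, 0 < √(w x) := fun x hx => Real.sqrt_pos.2 (hpos x hx)
  rw [integral_dissipation_eq_of_eqOn_sq hg hw hwg fun x hx => (hg0 x hx).ne',
    fisherInformation_eq_of_eqOn_sq hg hw hwg fun x hx => (hg0 x hx).ne']
  linarith [integral_curvature_dimension hn hg hg0]

end FisherInformation

section EntropyDissipation

variable {u : ℝ → E n → ℝ} {I : Set ℝ} {t : ℝ}

lemma isOpen_setOf_forall_unitSphere_pos
    (hu : ContinuousOn (fun q : ℝ × E n => u q.1 q.2) (Set.univ ×ˢ unitSphere n)) :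
    IsOpen {t | ∀ x ∈ unitSphere n, 0 < u t x} := by
  have hcont : Continuous fun q : ℝ × unitSphere n => u q.1 q.2 :=
    hu.comp_continuous (f := fun q : ℝ × unitSphere n => (q.1, (q.2 : E n))) (by fun_prop)
      fun q => ⟨trivial, q.2.2⟩
  have hclosed : IsClosed (Prod.fst '' {q : ℝ × unitSphere n | u q.1 q.2 ≤ 0}) :=
    isClosedMap_fst_of_compactSpace _ (isClosed_le hcont continuous_const)
  convert hclosed.isOpen_compl using 1
  ext t
  simp

variable [NeZero n]

lemma hasDerivAt_integral_sphMeasure {F F' : ℝ → E n → ℝ} (hI : IsOpen I)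
    (hF : ∀ t ∈ I, ContinuousOn (F t) (unitSphere n))
    (hderiv : ∀ t ∈ I, ∀ x ∈ unitSphere n, HasDerivAt (fun t => F t x) (F' t x) t)
    (hF' : ContinuousOn (fun q : ℝ × E n => F' q.1 q.2) (I ×ˢ unitSphere n)) (ht : t ∈ I) :
    HasDerivAt (fun t => ∫ x, F t x ∂sphMeasure n) (∫ x, F' t x ∂sphMeasure n) t := by
  obtain ⟨ε, hε, hsub⟩ := nhds_basis_closedBall.mem_iff.1 (hI.mem_nhds ht)
  obtain ⟨C, hC⟩ := ((isCompact_closedBall t ε).prod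
    (isCompact_sphere (0 : E n) 1)).exists_bound_of_continuousOn
    (hF'.mono (Set.prod_mono_left hsub))
  have hF't : ContinuousOn (F' t) (unitSphere n) :=
    hF'.comp (f := fun x : E n => (t, x)) (by fun_prop) fun x hx => ⟨ht, hx⟩
  exact (hasDerivAt_integral_of_dominated_loc_of_deriv_le (bound := fun _ => C)
    (closedBall_mem_nhds t hε)
    (eventually_of_mem (hI.mem_nhds ht) fun s hs =>
      (integrable_of_continuousOn_unitSphere (hF s hs)).aestronglyMeasurable)
    (integrable_of_continuousOn_unitSphere (hF t ht))
    (integrable_of_continuousOn_unitSphere hF't).aestronglyMeasurable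
    (ae_mem_unitSphere.mono fun x hx s hs => hC (s, x) ⟨hs, hx⟩) (integrable_const C)
    (ae_mem_unitSphere.mono fun x hx s hs => hderiv s (hsub hs) x hx)).2

namespace IsHeatFlow

lemma hasDerivAt_integral_mul_log (hu : IsHeatFlow u) (ht : ∀ x ∈ unitSphere n, 0 < u t x) :
    HasDerivAt (fun t => ∫ x, u t x * Real.log (u t x) ∂sphMeasure n)
      (-fisherInformation (u t)) t := by
  set I := {t | ∀ x ∈ unitSphere n, 0 < u t x}
  have hI : I ×ˢ unitSphere n ⊆ Set.univ ×ˢ unitSphere n := Set.prod_mono_left (Set.subset_univ _)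
  have hu_cont := hu.continuousOn.mono hI
  have hL_cont := hu.continuousOn_sphLaplacian.mono hI
  have hderiv := hasDerivAt_integral_sphMeasure (F := fun t x => u t x * Real.log (u t x))
    (F' := fun t x => (Real.log (u t x) + 1) * sphLaplacian (u t) x)
    (isOpen_setOf_forall_unitSphere_pos hu.continuousOn)
    (fun s hs => ((hu.smooth s).mul ((hu.smooth s).log hs)).continuousOn)
    (fun s hs x hx => HasDerivAt.comp (h₂ := fun r => r * Real.log r) s
      (Real.hasDerivAt_mul_log (hs x hx).ne') (hu.hasDerivAt s x hx))
    (((hu_cont.log fun q hq => (hq.1 q.2 hq.2).ne').add continuousOn_const).mul hL_cont) ht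
  refine hderiv.congr_deriv ?_
  have hlog := (hu.smooth t).log ht
  rw [integral_mul_sphLaplacian (hlog.add (.const 1)) (hu.smooth t)]
  refine congrArg Neg.neg (integral_congr_of_eqOn_unitSphere fun x hx => ?_)
  have hlog_deriv := (Real.hasDerivAt_log (ht x hx).ne').add_const 1
  rw [gradInner_comp_left hlog_deriv ((hu.smooth t).smooth_differentiableAt hx), gradInner_self,
    inv_mul_eq_div]

lemma hasDerivAt_fisherInformation (hu : IsHeatFlow u) (ht : ∀ x ∈ unitSphere n, 0 < u t x) :
    HasDerivAt (fun t => fisherInformation (u t))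
      (∫ x, (2 * gradInner (u t) (sphLaplacian (u t)) x / u t x -
        gradSq (u t) x * sphLaplacian (u t) x / u t x ^ 2) ∂sphMeasure n) t := by
  set I := {t | ∀ x ∈ unitSphere n, 0 < u t x}
  have hI : I ×ˢ unitSphere n ⊆ Set.univ ×ˢ unitSphere n := Set.prod_mono_left (Set.subset_univ _)
  have hu_cont := hu.continuousOn.mono hI
  refine hasDerivAt_integral_sphMeasure (F := fun t x => gradSq (u t) x / u t x)
    (F' := fun t x => 2 * gradInner (u t) (sphLaplacian (u t)) x / u t x -
      gradSq (u t) x * sphLaplacian (u t) x / u t x ^ 2)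
    (isOpen_setOf_forall_unitSphere_pos hu.continuousOn)
    (fun s hs => ((hu.smooth s).gradSq.div (hu.smooth s) fun x hx => (hs x hx).ne').continuousOn)
    (fun s hs x hx => ?_) ?_ ht
  · have hne := (hs x hx).ne'
    refine ((hu.hasDerivAt_gradSq s hx).fun_div (hu.hasDerivAt s x hx) hne).congr_deriv ?_
    field_simp
  · refine ContinuousOn.sub ?_ ?_
    · exact ((hu.continuousOn_gradInner_sphLaplacian.mono hI).const_mul 2).div hu_cont
        fun q hq => (hq.1 q.2 hq.2).ne'
    · exact ((hu.continuousOn_gradSq.mono hI).mul (hu.continuousOn_sphLaplacian.mono hI)).div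
        (hu_cont.pow 2) fun q hq => pow_ne_zero 2 (hq.1 q.2 hq.2).ne'

lemma integral_eq (hu : IsHeatFlow u) (t : ℝ) :
    ∫ x, u t x ∂sphMeasure n = ∫ x, u 0 x ∂sphMeasure n := by
  have hderiv : ∀ t, HasDerivAt (fun t => ∫ x, u t x ∂sphMeasure n) 0 t := fun t =>
    (hasDerivAt_integral_sphMeasure isOpen_univ (fun s _ => (hu.smooth s).continuousOn)
      (fun s _ => hu.hasDerivAt s) hu.continuousOn_sphLaplacian (Set.mem_univ t)).congr_deriv
      (integral_sphLaplacian (hu.smooth t))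
  exact is_const_of_deriv_eq_zero (fun t => (hderiv t).differentiableAt)
    (fun t => (hderiv t).deriv) t 0

end IsHeatFlow

end EntropyDissipation

section LogSobolevPolynomials

open scoped ContDiff Topology

variable {u : ℝ → E n → ℝ} {T : ℝ}

lemma exists_forall_unitSphere_le_pow_two {w : E n → ℝ} (hw : ContinuousOn w (unitSphere n)) :
    ∃ M : ℝ, 0 ≤ M ∧ ∀ x ∈ unitSphere n, w x ≤ M ^ 2 := by
  obtain ⟨C, hC⟩ := (isCompact_sphere (0 : E n) 1).exists_bound_of_continuousOn hw
  refine ⟨√|C|, Real.sqrt_nonneg _, fun x hx => ?_⟩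
  rw [Real.sq_sqrt (abs_nonneg _)]
  exact (le_abs_self _).trans ((hC x hx).trans (le_abs_self _))

namespace IsHeatFlow

lemma pos (hu : IsHeatFlow u) (hpos : ∀ x ∈ unitSphere n, 0 < u 0 x) (hT : 0 ≤ T) {x : E n}
    (hx : x ∈ unitSphere n) : 0 < u T x := by
  obtain ⟨x₀, hx₀, hmin⟩ := (isCompact_sphere (0 : E n) 1).exists_isMinOn ⟨x, hx⟩
    (hu.smooth 0).continuousOn
  exact (hpos x₀ hx₀).trans_le (hu.le_of_le_zero (fun y hy => hmin hy) hT hx)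

variable [NeZero n]

lemma le_integral_add (hu : IsHeatFlow u) (hn : 2 ≤ n) {M : ℝ} (hM : 0 ≤ M)
    (h0 : ∀ x ∈ unitSphere n, gradSq (u 0) x ≤ M ^ 2) (hT : 0 ≤ T) {x : E n}
    (hx : x ∈ unitSphere n) :
    u T x ≤ ∫ y, u 0 y ∂sphMeasure n + Real.exp (-((n - 2) * T)) * M * Real.pi := by
  have hgrad : ∀ y ∈ unitSphere n, gradSq (u T) y ≤ (Real.exp (-((n - 2) * T)) * M) ^ 2 :=
    fun y hy => (hu.gradSq_le h0 hT hy).trans_eq <| by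
      rw [mul_pow, ← Real.exp_nat_mul]
      push_cast
      ring_nf
  have hosc : ∀ y ∈ unitSphere n, u T x - Real.exp (-((n - 2) * T)) * M * Real.pi ≤ u T y :=
    fun y hy => sub_le_comm.1 <| sub_le_mul_pi_of_gradSq_le hn ((hu.smooth T).of_le (by norm_cast))
      (mul_nonneg (Real.exp_pos _).le hM) hgrad hy hx
  have hmean := integral_mono_of_le_on_unitSphere continuousOn_const
    (hu.smooth T).continuousOn hosc
  rw [integral_const, probReal_univ, one_smul, hu.integral_eq T] at hmean
  linarith

lemma entropy_sub_monotoneOn (hu : IsHeatFlow u) (hn : 3 ≤ n)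
    (hpos : ∀ x ∈ unitSphere n, 0 < u 0 x) :
    MonotoneOn (fun t => entropy (sphMeasure n) (u t) -
      1 / (2 * ((n : ℝ) - 1)) * fisherInformation (u t)) (Set.Ici 0) := by
  have hn1 : 0 < 2 * ((n : ℝ) - 1) := by
    have : (3 : ℝ) ≤ n := by exact_mod_cast hn
    linarith
  have hpos' : ∀ t ∈ Set.Ici (0 : ℝ), ∀ x ∈ unitSphere n, 0 < u t x := fun t ht x hx =>
    hu.pos hpos ht hx
  have hderiv : ∀ t ∈ Set.Ici (0 : ℝ), HasDerivAt (fun t => entropy (sphMeasure n) (u t) -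
      1 / (2 * ((n : ℝ) - 1)) * fisherInformation (u t)) _ t := fun t ht => by
    simp only [entropy, hu.integral_eq]
    exact ((hu.hasDerivAt_integral_mul_log (hpos' t ht)).sub_const _).fun_sub
      ((hu.hasDerivAt_fisherInformation (hpos' t ht)).const_mul _)
  refine monotoneOn_of_deriv_nonneg (convex_Ici 0)
    (fun t ht => (hderiv t ht).continuousAt.continuousWithinAt)
    (fun t ht => (hderiv t (interior_subset ht)).differentiableAt.differentiableWithinAt)
    fun t ht => ?_
  rw [(hderiv t (interior_subset ht)).deriv]
  have hdissipation := fisherInformation_le_dissipation hn (hu.smooth t)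
    (hpos' t (interior_subset ht))
  rw [sub_nonneg, one_div_mul_eq_div, div_le_iff₀ hn1]
  linarith

lemma entropy_le (hu : IsHeatFlow u) (hn : 2 ≤ n) (hpos : ∀ x ∈ unitSphere n, 0 < u 0 x)
    {M : ℝ} (hM : 0 ≤ M) (h0 : ∀ x ∈ unitSphere n, gradSq (u 0) x ≤ M ^ 2) (hT : 0 ≤ T) :
    entropy (sphMeasure n) (u T) ≤ (∫ x, u 0 x ∂sphMeasure n) *
      Real.log (∫ x, u 0 x ∂sphMeasure n + Real.exp (-((n - 2) * T)) * M * Real.pi) -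
      (∫ x, u 0 x ∂sphMeasure n) * Real.log (∫ x, u 0 x ∂sphMeasure n) := by
  have hpos' : ∀ x ∈ unitSphere n, 0 < u T x := fun x hx => hu.pos hpos hT hx
  rw [entropy, hu.integral_eq T, sub_le_sub_iff_right]
  conv_rhs => rw [← hu.integral_eq T, ← integral_mul_const]
  refine integral_mono_of_le_on_unitSphere
    ((hu.smooth T).mul ((hu.smooth T).log hpos')).continuousOn
    ((hu.smooth T).mul (.const _)).continuousOn fun x hx =>
      mul_le_mul_of_nonneg_left (Real.log_le_log (hpos' x hx) ?_) (hpos' x hx).le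
  rw [hu.integral_eq T]
  exact hu.le_integral_add hn hM h0 hT hx

end IsHeatFlow

lemma integral_pos_of_pos_on_unitSphere [NeZero n] {w : E n → ℝ}
    (hw : ContinuousOn w (unitSphere n)) (hpos : ∀ x ∈ unitSphere n, 0 < w x) :
    0 < ∫ x, w x ∂sphMeasure n := by
  obtain ⟨x, hx⟩ := (ae_mem_unitSphere (n := n)).exists
  obtain ⟨x₀, hx₀, hmin⟩ := (isCompact_sphere (0 : E n) 1).exists_isMinOn ⟨x, hx⟩ hw
  have hle := integral_mono_of_le_on_unitSphere continuousOn_const hw fun y hy => hmin hy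
  rw [integral_const, probReal_univ, one_smul] at hle
  exact (hpos x₀ hx₀).trans_le hle

theorem entropy_le_fisherInformation_of_mem_polyDegreeLE (hn : 3 ≤ n) {k : ℕ} {p : E n → ℝ}
    (hp : p ∈ polyDegreeLE n k) (hpos : ∀ x ∈ unitSphere n, 0 < p x) :
    entropy (sphMeasure n) p ≤ 1 / (2 * (n - 1)) * fisherInformation p := by
  have : NeZero n := ⟨by omega⟩
  have hn3 : (3 : ℝ) ≤ n := by exact_mod_cast hn
  obtain ⟨u, hu, rfl⟩ := exists_isHeatFlow_of_mem_polyDegreeLE hp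
  obtain ⟨M, hM, hgrad⟩ := exists_forall_unitSphere_le_pow_two (hu.smooth 0).gradSq.continuousOn
  set m := ∫ x, u 0 x ∂sphMeasure n
  have hm : 0 < m := integral_pos_of_pos_on_unitSphere (hu.smooth 0).continuousOn hpos
  have hdecay : Tendsto (fun T : ℝ => Real.exp (-(((n : ℝ) - 2) * T))) atTop (𝓝 0) :=
    Real.tendsto_exp_neg_atTop_nhds_zero.comp (tendsto_id.const_mul_atTop (by linarith))
  have hentropy : Tendsto (fun T : ℝ => m * Real.log (m + Real.exp (-((n - 2) * T)) * M * Real.pi) -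
      m * Real.log m) atTop (𝓝 0) := by
    have hlim : Tendsto (fun T : ℝ => m + Real.exp (-((n - 2) * T)) * M * Real.pi) atTop (𝓝 m) := by
      simpa using ((hdecay.mul_const M).mul_const Real.pi).const_add m
    simpa using ((hlim.log hm.ne').const_mul m).sub_const (m * Real.log m)
  rw [← sub_nonpos]
  refine ge_of_tendsto hentropy (eventually_atTop.2 ⟨0, fun T hT => ?_⟩)
  have hmono := hu.entropy_sub_monotoneOn hn hpos Set.self_mem_Ici hT hT
  have hT_le := hu.entropy_le (by omega) hpos hM hgrad hT
  have hfisher : 0 ≤ 1 / (2 * ((n : ℝ) - 1)) * fisherInformation (u T) :=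
    mul_nonneg (one_div_nonneg.2 (by linarith))
      (fisherInformation_nonneg fun x hx => hu.pos hpos hT hx)
  linarith

end LogSobolevPolynomials

section ZonalApproximation

open scoped ContDiff Topology

/-- Spherical convolution with the zonal polynomial `(1 + ⟪x, y⟫) ^ k`, which concentrates at
`y = x` as `k → ∞`. -/
def zonal (k : ℕ) (w : E n → ℝ) (x : E n) : ℝ :=
  ∫ y, (1 + ⟪x, y⟫) ^ k * w y ∂sphMeasure n

/-- The convolution `zonal k`, normalized to fix constants on the sphere. -/
def zonalMean (k : ℕ) (w : E n → ℝ) (x : E n) : ℝ :=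
  (∫ z, zonal k (fun _ => 1) z ∂sphMeasure n)⁻¹ * zonal k w x

variable {w : E n → ℝ} {x y : E n} {k : ℕ}

lemma continuousOn_zonal_integrand (k : ℕ) (hw : ContinuousOn w (unitSphere n)) (x : E n) :
    ContinuousOn (fun y => (1 + ⟪x, y⟫) ^ k * w y) (unitSphere n) :=
  ContinuousOn.mul (by fun_prop) hw

lemma one_add_inner_nonneg (hx : x ∈ unitSphere n) (hy : y ∈ unitSphere n) :
    0 ≤ 1 + ⟪x, y⟫ := by
  rw [mem_sphere_zero_iff_norm] at hx hy
  have hle := (abs_le.1 (abs_real_inner_le_norm x y)).1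
  rw [hx, hy] at hle
  linarith

lemma zonal_one_eq (k : ℕ) (hx : x ∈ unitSphere n) (hy : y ∈ unitSphere n) :
    zonal k (fun _ => 1) y = zonal k (fun _ => 1) x := by
  rw [mem_sphere_zero_iff_norm] at hx hy
  obtain ⟨L, rfl⟩ : ∃ L : E n ≃ₗᵢ[ℝ] E n, L y = x :=
    ⟨_, Submodule.reflection_sub (hy.trans hx.symm)⟩
  rw [zonal, zonal, ← integral_comp_linearIsometryEquiv L fun z => (1 + ⟪L y, z⟫) ^ k * 1]
  simp only [LinearIsometryEquiv.inner_map_map]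

variable [NeZero n]

lemma zonal_succ (k : ℕ) (hw : ContinuousOn w (unitSphere n)) :
    zonal (k + 1) w = zonal k w + ∑ i, fun x : E n => x i * zonal k (fun y => y i * w y) x := by
  have hcoord : ∀ i : Fin n, ContinuousOn (fun y : E n => y i * w y) (unitSphere n) := fun i =>
    ContinuousOn.mul (by fun_prop) hw
  funext x
  have hint : ∀ i : Fin n,
      Integrable (fun y : E n => x i * ((1 + ⟪x, y⟫) ^ k * (y i * w y))) (sphMeasure n) := fun i =>
    Integrable.const_mul (integrable_of_continuousOn_unitSphere
      (continuousOn_zonal_integrand k (hcoord i) x)) _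
  simp only [Pi.add_apply, Finset.sum_apply, zonal, ← integral_const_mul]
  have hint₀ := integrable_of_continuousOn_unitSphere (continuousOn_zonal_integrand k hw x)
  rw [← integral_finsetSum _ fun i _ => hint i,
    ← integral_add hint₀ (integrable_finsetSum _ fun i _ => hint i)]
  refine integral_congr_of_eqOn_unitSphere fun y _ => ?_
  have hinner : ⟪x, y⟫ = ∑ i, x i * y i := by simp [PiLp.inner_apply, mul_comm]
  have hsum : ∑ i, x i * ((1 + ⟪x, y⟫) ^ k * (y i * w y)) =
      ⟪x, y⟫ * ((1 + ⟪x, y⟫) ^ k * w y) := by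
    rw [hinner, Finset.sum_mul]
    exact Finset.sum_congr rfl fun i _ => by ring
  simp only [hsum]
  ring

lemma zonal_mem_polyDegreeLE (k : ℕ) (hw : ContinuousOn w (unitSphere n)) :
    zonal k w ∈ polyDegreeLE n k := by
  induction k generalizing w with
  | zero =>
    refine Submodule.mem_span_singleton.2 ⟨∫ y, w y ∂sphMeasure n, funext fun x => ?_⟩
    simp [zonal]
  | succ k ih =>
    rw [zonal_succ k hw]
    exact Submodule.add_mem _ (polyDegreeLE_le_succ n k (ih hw)) (Submodule.sum_mem _ fun i _ =>
      coord_mul_mem_polyDegreeLE (ih (ContinuousOn.mul (by fun_prop) hw)) i)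

lemma differentiable_zonal (k : ℕ) (hw : ContinuousOn w (unitSphere n)) :
    Differentiable ℝ (zonal k w) :=
  (contDiff_of_mem_polyDegreeLE (zonal_mem_polyDegreeLE k hw)).differentiable (by simp)

lemma rotationDeriv_zonal (k : ℕ) (hw : ContDiffNearSphere 1 w) (i j : Fin n) (x : E n) :
    rotationDeriv i j (zonal k w) x = zonal k (rotationDeriv i j w) x := by
  rcases eq_or_ne i j with rfl | hij
  · simp [zonal, rotationDeriv_self]
  have hrotate : ∀ s, zonal k w (rotate i j s x) =
      ∫ y, (1 + ⟪x, y⟫) ^ k * w (rotate i j s y) ∂sphMeasure n := fun s => by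
    rw [zonal, ← integral_comp_linearIsometryEquiv (rotateIsometry hij s)]
    refine integral_congr_ae (.of_forall fun y => ?_)
    simp only [← rotateIsometry_apply hij, LinearIsometryEquiv.inner_map_map]
  have hleft := hasDerivAt_comp_rotate hij (s := 0) (x := x)
    (differentiable_zonal k hw.continuousOn _)
  have hright := hasDerivAt_integral_sphMeasure (n := n) (I := Set.univ) (t := 0)
    (F := fun s y => (1 + ⟪x, y⟫) ^ k * w (rotate i j s y))
    (F' := fun s y => (1 + ⟪x, y⟫) ^ k * rotationDeriv i j w (rotate i j s y)) isOpen_univ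
    (fun s _ => continuousOn_zonal_integrand k (hw.continuousOn.comp
      (rotateIsometry hij s).continuous.continuousOn fun y hy => rotate_mem_unitSphere hij s hy) x)
    (fun s _ y hy => (hasDerivAt_comp_rotate hij
      (hw.differentiableAt one_ne_zero (rotate_mem_unitSphere hij s hy))).const_mul _)
    (ContinuousOn.mul (by fun_prop) ((hw.continuousOn_rotationDeriv i j).comp
      (f := fun q : ℝ × E n => rotate i j q.1 q.2) (by unfold rotate; fun_prop)
      fun q hq => rotate_mem_unitSphere hij q.1 hq.2))
    (Set.mem_univ _)
  simp only [hrotate] at hleft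
  simpa only [rotate_zero, zonal] using hleft.unique hright

-- Bernoulli's inequality, as the linear function `⟪x, ·⟫` has mean zero.
lemma one_le_zonal_one (k : ℕ) (hx : x ∈ unitSphere n) : 1 ≤ zonal k (fun _ => 1) x := by
  have hmean : ∫ y, ⟪x, y⟫ ∂sphMeasure n = 0 := by
    have hneg := integral_comp_linearIsometryEquiv (LinearIsometryEquiv.neg ℝ (E := E n))
      fun y => ⟪x, y⟫
    simp only [LinearIsometryEquiv.coe_neg, inner_neg_right, integral_neg] at hneg
    linarith
  have hle := integral_mono_of_le_on_unitSphere (n := n) (w := fun y => 1 + k * ⟪x, y⟫)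
    (g := fun y => (1 + ⟪x, y⟫) ^ k * 1) (by fun_prop) (by fun_prop) fun y hy => by
      rw [mul_one]
      exact one_add_mul_le_pow (by linarith [one_add_inner_nonneg hx hy]) k
  rwa [integral_add (integrable_const _) (integrable_of_continuousOn_unitSphere (by fun_prop)),
    integral_const_mul, hmean, mul_zero, add_zero, integral_const, probReal_univ, one_smul] at hle

lemma zonalMean_eq (k : ℕ) (w : E n → ℝ) (hx : x ∈ unitSphere n) :
    zonalMean k w x = (zonal k (fun _ => 1) x)⁻¹ * zonal k w x := by
  have hconst := integral_congr_of_eqOn_unitSphere (n := n)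
    (g := fun _ => zonal k (fun _ => 1) x) fun z hz => zonal_one_eq k hx hz
  rw [zonalMean, hconst, integral_const, probReal_univ, one_smul]

lemma zonalMean_mem_polyDegreeLE (k : ℕ) (hw : ContinuousOn w (unitSphere n)) :
    zonalMean k w ∈ polyDegreeLE n k :=
  Submodule.smul_mem _ _ (zonal_mem_polyDegreeLE k hw)

lemma contDiffNearSphere_zonalMean (k : ℕ) (hw : ContinuousOn w (unitSphere n)) :
    ContDiffNearSphere ∞ (zonalMean k w) :=
  contDiffNearSphere_of_mem_polyDegreeLE (zonalMean_mem_polyDegreeLE k hw)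

lemma rotationDeriv_zonalMean (k : ℕ) (hw : ContDiffNearSphere 1 w) (i j : Fin n) (x : E n) :
    rotationDeriv i j (zonalMean k w) x = zonalMean k (rotationDeriv i j w) x := by
  rw [zonalMean, ← rotationDeriv_zonal k hw]
  change fderiv ℝ (fun y => _ * zonal k w y) x _ = _
  rw [fderiv_const_mul (differentiable_zonal k hw.continuousOn _)]
  rfl

lemma zonalMean_mem_Icc (k : ℕ) (hw : ContinuousOn w (unitSphere n)) {a b : ℝ}
    (hab : ∀ y ∈ unitSphere n, w y ∈ Set.Icc a b) (hx : x ∈ unitSphere n) :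
    zonalMean k w x ∈ Set.Icc a b := by
  have hmass : 0 < zonal k (fun _ => 1) x := one_pos.trans_le (one_le_zonal_one k hx)
  have hkernel : ∀ y ∈ unitSphere n, 0 ≤ (1 + ⟪x, y⟫) ^ k := fun y hy =>
    pow_nonneg (one_add_inner_nonneg hx hy) k
  have hconst : ∀ c, c * zonal k (fun _ => 1) x = ∫ y, (1 + ⟪x, y⟫) ^ k * c ∂sphMeasure n :=
    fun c => by simp only [zonal, mul_one, integral_mul_const, mul_comm c]
  rw [zonalMean_eq k w hx, inv_mul_eq_div, Set.mem_Icc, le_div_iff₀ hmass, div_le_iff₀ hmass,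
    hconst, hconst]
  exact ⟨integral_mono_of_le_on_unitSphere (by fun_prop) (continuousOn_zonal_integrand k hw x)
      fun y hy => mul_le_mul_of_nonneg_left (hab y hy).1 (hkernel y hy),
    integral_mono_of_le_on_unitSphere (continuousOn_zonal_integrand k hw x) (by fun_prop)
      fun y hy => mul_le_mul_of_nonneg_left (hab y hy).2 (hkernel y hy)⟩

lemma tendsto_zonalMean (hw : ContinuousOn w (unitSphere n)) (hx : x ∈ unitSphere n) :
    Tendsto (fun k => zonalMean k w x) atTop (𝓝 (w x)) := by
  have hrestrict : (sphMeasure n).restrict (unitSphere n) = sphMeasure n :=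
    Measure.restrict_eq_self_of_ae_mem ae_mem_unitSphere
  have hx1 : ‖x‖ = 1 := mem_sphere_zero_iff_norm.1 hx
  have hpeak :=
    tendsto_setIntegral_pow_smul_of_unique_maximum_of_isCompact_of_measure_nhdsWithin_pos
    (μ := sphMeasure n) (c := fun y => 1 + ⟪x, y⟫) (g := w) (x₀ := x) (isCompact_sphere 0 1)
    (fun U hU hxU => by
      rw [← Measure.restrict_apply hU.measurableSet, hrestrict]
      exact sphMeasure_pos_of_isOpen hU ⟨x, hxU, hx⟩)
    (by fun_prop)
    (fun y hy hne => by
      rw [real_inner_self_eq_norm_sq, hx1]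
      linarith [(inner_lt_one_iff_real_of_norm_eq_one hx1
        (mem_sphere_zero_iff_norm.1 hy)).2 hne.symm])
    (fun y hy => one_add_inner_nonneg hx hy)
    (by rw [real_inner_self_eq_norm_sq, hx1]; norm_num) hx
    (by rw [IntegrableOn, hrestrict]; exact integrable_of_continuousOn_unitSphere hw) (hw x hx)
  rw [hrestrict] at hpeak
  refine hpeak.congr fun k => ?_
  simp only [zonalMean_eq k w hx, zonal, mul_one, smul_eq_mul]

end ZonalApproximation

section LogSobolev

open scoped ContDiff Topology

variable {w : E n → ℝ} {x : E n}

lemma two_mul_gradSq_eq_sum_rotationDeriv_sq (hx : x ∈ unitSphere n) (w : E n → ℝ) :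
    2 * gradSq w x = ∑ i, ∑ j, rotationDeriv i j w x ^ 2 := by
  have hexpand : ∑ i, ∑ j, rotationDeriv i j w x ^ 2 =
      2 * ((∑ i, x i ^ 2) * ∑ j, tangentDeriv j w x ^ 2) -
        2 * (∑ i, x i * tangentDeriv i w x) ^ 2 := by
    simp only [rotationDeriv_eq_tangentDeriv]
    have hswap : ∑ i, ∑ j, (x j * tangentDeriv i w x) ^ 2 =
        ∑ i, ∑ j, (x i * tangentDeriv j w x) ^ 2 := Finset.sum_comm
    have hsq : ∑ i, ∑ j, (x i * tangentDeriv j w x) ^ 2 =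
        (∑ i, x i ^ 2) * ∑ j, tangentDeriv j w x ^ 2 := by
      simp only [Finset.sum_mul_sum, mul_pow]
    have hcross : ∑ i, ∑ j, 2 * (x i * tangentDeriv i w x * (x j * tangentDeriv j w x)) =
        2 * (∑ i, x i * tangentDeriv i w x) ^ 2 := by
      simp only [← Finset.mul_sum, sq, Finset.sum_mul_sum]
    calc ∑ i, ∑ j, (x i * tangentDeriv j w x - x j * tangentDeriv i w x) ^ 2
        = ∑ i, ∑ j, ((x i * tangentDeriv j w x) ^ 2 + (x j * tangentDeriv i w x) ^ 2 -
            2 * (x i * tangentDeriv i w x * (x j * tangentDeriv j w x))) :=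
          Finset.sum_congr rfl fun i _ => Finset.sum_congr rfl fun j _ => by ring
      _ = _ := by
          simp only [Finset.sum_sub_distrib, Finset.sum_add_distrib, hswap, hsq, hcross]
          ring
  rw [hexpand, sum_sq_eq_one hx, sum_coord_mul_tangentDeriv hx, gradSq]
  ring

variable [NeZero n]

lemma tendsto_integral_sphMeasure {F : ℕ → E n → ℝ} (hF : ∀ k, ContinuousOn (F k) (unitSphere n))
    {B : ℝ} (hB : ∀ k, ∀ x ∈ unitSphere n, |F k x| ≤ B)
    (hlim : ∀ x ∈ unitSphere n, Tendsto (fun k => F k x) atTop (𝓝 (w x))) :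
    Tendsto (fun k => ∫ x, F k x ∂sphMeasure n) atTop (𝓝 (∫ x, w x ∂sphMeasure n)) :=
  tendsto_integral_of_dominated_convergence (fun _ => B)
    (fun k => (integrable_of_continuousOn_unitSphere (hF k)).aestronglyMeasurable)
    (integrable_const _) (fun k => ae_mem_unitSphere.mono (hB k)) (ae_mem_unitSphere.mono hlim)

lemma tendsto_gradSq_zonalMean (hw : ContDiffNearSphere 1 w) (hx : x ∈ unitSphere n) :
    Tendsto (fun k => gradSq (zonalMean k w) x) atTop (𝓝 (gradSq w x)) := by
  have hgradSq : ∀ v : E n → ℝ, gradSq v x = (∑ i, ∑ j, rotationDeriv i j v x ^ 2) / 2 :=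
    fun v => by rw [← two_mul_gradSq_eq_sum_rotationDeriv_sq hx, mul_div_cancel_left₀ _ two_ne_zero]
  simp only [hgradSq, rotationDeriv_zonalMean _ hw]
  exact (tendsto_finsetSum _ fun i _ => tendsto_finsetSum _ fun j _ =>
    (tendsto_zonalMean (hw.continuousOn_rotationDeriv i j) hx).pow 2).div_const 2

lemma exists_gradSq_zonalMean_le (hw : ContDiffNearSphere 1 w) :
    ∃ B : ℝ, ∀ k, ∀ x ∈ unitSphere n, gradSq (zonalMean k w) x ≤ B := by
  choose C hC using fun i j =>
    (isCompact_sphere (0 : E n) 1).exists_bound_of_continuousOn (hw.continuousOn_rotationDeriv i j)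
  refine ⟨(∑ i, ∑ j, C i j ^ 2) / 2, fun k x hx => ?_⟩
  rw [le_div_iff₀' two_pos, two_mul_gradSq_eq_sum_rotationDeriv_sq hx]
  refine Finset.sum_le_sum fun i _ => Finset.sum_le_sum fun j _ => ?_
  rw [rotationDeriv_zonalMean k hw]
  exact sq_le_sq' (zonalMean_mem_Icc k (hw.continuousOn_rotationDeriv i j)
    (fun y hy => abs_le.1 (hC i j y hy)) hx).1 (zonalMean_mem_Icc k
    (hw.continuousOn_rotationDeriv i j) (fun y hy => abs_le.1 (hC i j y hy)) hx).2

lemma exists_pos_forall_mem_Icc (hw : ContinuousOn w (unitSphere n))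
    (hpos : ∀ x ∈ unitSphere n, 0 < w x) :
    ∃ a b : ℝ, 0 < a ∧ ∀ x ∈ unitSphere n, w x ∈ Set.Icc a b := by
  obtain ⟨x, hx⟩ := (ae_mem_unitSphere (n := n)).exists
  obtain ⟨x₀, hx₀, hmin⟩ := (isCompact_sphere (0 : E n) 1).exists_isMinOn ⟨x, hx⟩ hw
  obtain ⟨x₁, _, hmax⟩ := (isCompact_sphere (0 : E n) 1).exists_isMaxOn ⟨x, hx⟩ hw
  exact ⟨w x₀, w x₁, hpos x₀ hx₀, fun y hy => ⟨hmin hy, hmax hy⟩⟩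

lemma tendsto_entropy_zonalMean (hw : ContinuousOn w (unitSphere n))
    (hpos : ∀ x ∈ unitSphere n, 0 < w x) :
    Tendsto (fun k => entropy (sphMeasure n) (zonalMean k w)) atTop
      (𝓝 (entropy (sphMeasure n) w)) := by
  obtain ⟨a, b, -, hab⟩ := exists_pos_forall_mem_Icc hw hpos
  have hbounded : ∀ k, ∀ x ∈ unitSphere n, zonalMean k w x ∈ Set.Icc a b := fun k x hx =>
    zonalMean_mem_Icc k hw hab hx
  have hcomp : ∀ φ : ℝ → ℝ, Continuous φ →
      Tendsto (fun k => ∫ x, φ (zonalMean k w x) ∂sphMeasure n) atTop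
        (𝓝 (∫ x, φ (w x) ∂sphMeasure n)) := fun φ hφ => by
    obtain ⟨B, hB⟩ := (isCompact_Icc (a := a) (b := b)).exists_bound_of_continuousOn hφ.continuousOn
    exact tendsto_integral_sphMeasure
      (fun k => hφ.comp_continuousOn (contDiffNearSphere_zonalMean k hw).continuousOn)
      (fun k x hx => hB _ (hbounded k x hx))
      fun x hx => (hφ.tendsto _).comp (tendsto_zonalMean hw hx)
  have hmean := hcomp id continuous_id
  exact (hcomp _ Real.continuous_mul_log).sub ((Real.continuous_mul_log.tendsto _).comp hmean)

lemma tendsto_fisherInformation_zonalMean (hw : ContDiffNearSphere 1 w)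
    (hpos : ∀ x ∈ unitSphere n, 0 < w x) :
    Tendsto (fun k => fisherInformation (zonalMean k w)) atTop (𝓝 (fisherInformation w)) := by
  obtain ⟨a, b, ha, hab⟩ := exists_pos_forall_mem_Icc hw.continuousOn hpos
  obtain ⟨B, hB⟩ := exists_gradSq_zonalMean_le hw
  have hge : ∀ k, ∀ x ∈ unitSphere n, a ≤ zonalMean k w x := fun k x hx =>
    (zonalMean_mem_Icc k hw.continuousOn hab hx).1
  have hsmooth := fun k => contDiffNearSphere_zonalMean k hw.continuousOn
  refine tendsto_integral_sphMeasure (B := B / a)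
    (fun k => ((hsmooth k).gradSq.div (hsmooth k)
      fun x hx => (ha.trans_le (hge k x hx)).ne').continuousOn)
    (fun k x hx => ?_)
    fun x hx => (tendsto_gradSq_zonalMean hw hx).div (tendsto_zonalMean hw.continuousOn hx)
      (hpos x hx).ne'
  rw [abs_of_nonneg (div_nonneg (gradSq_nonneg _ _) (ha.trans_le (hge k x hx)).le)]
  exact div_le_div₀ ((gradSq_nonneg _ _).trans (hB k x hx)) (hB k x hx) ha (hge k x hx)

theorem entropy_le_fisherInformation (hn : 3 ≤ n) (hw : ContDiffNearSphere 1 w)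
    (hpos : ∀ x ∈ unitSphere n, 0 < w x) :
    entropy (sphMeasure n) w ≤ 1 / (2 * (n - 1)) * fisherInformation w := by
  obtain ⟨a, b, ha, hab⟩ := exists_pos_forall_mem_Icc hw.continuousOn hpos
  exact le_of_tendsto_of_tendsto' (tendsto_entropy_zonalMean hw.continuousOn hpos)
    ((tendsto_fisherInformation_zonalMean hw hpos).const_mul _) fun k =>
      entropy_le_fisherInformation_of_mem_polyDegreeLE hn
        (zonalMean_mem_polyDegreeLE k hw.continuousOn) fun x hx =>
          ha.trans_le (zonalMean_mem_Icc k hw.continuousOn hab hx).1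

end LogSobolev

section Herbst

open ProbabilityTheory
open scoped Topology

lemma mul_inv_sub_le_deriv_zero_of_herbst {L L' : ℝ → ℝ} {c d T : ℝ} (hT : 0 < T)
    (hL : ∀ s, HasDerivAt L (L' s) s) (h0 : L 0 = 0)
    (hle : ∀ s ∈ Set.Ioc 0 T, s * L' s - L s ≤ s ^ 2 * (c * L' s + d)) :
    L T * (T⁻¹ - c) - d * T ≤ L' 0 := by
  set Φ : ℝ → ℝ := fun s => L s * (s⁻¹ - c) - d * s with hΦ_def
  have hderiv : ∀ s ∈ Set.Ioc 0 T,
      HasDerivAt Φ ((s * L' s - L s - s ^ 2 * (c * L' s + d)) / s ^ 2) s := fun s hs => by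
    have hs0 : s ≠ 0 := hs.1.ne'
    refine (((hL s).fun_mul ((hasDerivAt_inv hs0).sub_const c)).fun_sub
      ((hasDerivAt_id' s).const_mul d)).congr_deriv ?_
    field_simp
    ring
  have hanti : AntitoneOn Φ (Set.Ioc 0 T) :=
    antitoneOn_of_hasDerivWithinAt_nonpos (convex_Ioc 0 T)
      (fun s hs => (hderiv s hs).continuousAt.continuousWithinAt)
      (fun s hs => (hderiv s (interior_subset hs)).hasDerivWithinAt)
      fun s hs => div_nonpos_of_nonpos_of_nonneg
        (sub_nonpos.2 (hle s (interior_subset hs))) (sq_nonneg s)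
  have hlim : Tendsto Φ (𝓝[>] 0) (𝓝 (L' 0)) := by
    have hcont : ContinuousAt (fun s => L s * c + d * s) 0 :=
      ((hL 0).continuousAt.mul_const c).add (continuousAt_id.const_mul d)
    have hsub := (hL 0).tendsto_slope_zero_right.sub
      (hcont.tendsto.mono_left nhdsWithin_le_nhds)
    simp only [h0, zero_mul, mul_zero, add_zero, sub_zero, zero_add, smul_eq_mul] at hsub
    refine hsub.congr fun s => ?_
    rw [hΦ_def]
    ring
  refine ge_of_tendsto hlim ?_
  filter_upwards [Ioc_mem_nhdsGT hT] with s hs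
  exact hanti hs ⟨hT, le_rfl⟩ hs.2

variable {Ω : Type*} {mΩ : MeasurableSpace Ω} {μ : Measure Ω} {f g u : Ω → ℝ}

/-- The Gibbs variational principle, tested against the measure `μ.tilted f`. -/
lemma integral_tilted_add_log_le [NeZero μ] (hf : Integrable (fun ω => Real.exp (f ω)) μ)
    (hg : Integrable (fun ω => Real.exp (g ω)) μ) (hff : Integrable f (μ.tilted f))
    (hgf : Integrable g (μ.tilted f)) :
    ∫ ω, g ω ∂μ.tilted f + Real.log (∫ ω, Real.exp (f ω) ∂μ) ≤
      ∫ ω, f ω ∂μ.tilted f + Real.log (∫ ω, Real.exp (g ω) ∂μ) := by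
  have := isProbabilityMeasure_tilted hf
  have hexp : Integrable (fun ω => Real.exp (g ω - f ω)) (μ.tilted f) := by
    rw [integrable_tilted_iff hf]
    simpa only [smul_eq_mul, ← Real.exp_add, add_sub_cancel] using hg
  have hjensen := convexOn_exp.map_integral_le Real.continuous_exp.continuousOn isClosed_univ
    (.of_forall fun _ => Set.mem_univ _) (hgf.sub hff) hexp
  have hint := integral_exp_tilted (μ := μ) f (g - f)
  simp only [add_sub_cancel, Pi.sub_apply] at hint hjensen
  rw [hint, integral_sub hgf hff, ← Real.le_log_iff_exp_le
    (div_pos (integral_exp_pos hg) (integral_exp_pos hf)),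
    Real.log_div (integral_exp_pos hg).ne' (integral_exp_pos hf).ne'] at hjensen
  linarith

lemma hasDerivAt_cgf (hf : integrableExpSet f μ = Set.univ) (s : ℝ) :
    HasDerivAt (cgf f μ) (∫ ω, f ω ∂μ.tilted (s * f ·)) s := by
  have hs : s ∈ interior (integrableExpSet f μ) := by simp [hf]
  rw [integral_tilted_mul_self hs]
  exact (analyticAt_cgf hs).differentiableAt.hasDerivAt

variable [IsProbabilityMeasure μ]

lemma integral_tilted_zero_mul (f u : Ω → ℝ) :
    ∫ ω, u ω ∂μ.tilted ((0 : ℝ) * f ·) = ∫ ω, u ω ∂μ := by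
  simp

lemma mul_integral_tilted_le_entropy_add_cgf (hf : integrableExpSet f μ = Set.univ)
    (hu : integrableExpSet u μ = Set.univ) (s t : ℝ) (huf : Integrable u (μ.tilted (t * f ·))) :
    s * ∫ ω, u ω ∂μ.tilted (t * f ·) ≤
      (t * ∫ ω, f ω ∂μ.tilted (t * f ·) - cgf f μ t) + cgf u μ s := by
  have hexp : ∀ {v : Ω → ℝ}, integrableExpSet v μ = Set.univ → ∀ r,
      Integrable (fun ω => Real.exp (r * v ω)) μ := fun hv r =>
    integrable_of_mem_integrableExpSet (hv ▸ Set.mem_univ r)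
  have hff : Integrable f (μ.tilted (t * f ·)) :=
    (memLp_tilted_mul (by simp [hf]) 1).integrable le_rfl
  have hgibbs := integral_tilted_add_log_le (hexp hf t) (hexp hu s) (hff.const_mul t)
    (huf.const_mul s)
  rw [integral_const_mul, integral_const_mul] at hgibbs
  simp only [cgf, mgf]
  linarith

/-- Herbst's argument, run first for `u` and then for `f`. For `u` equal to the squared gradient
of `f`, the assumptions `hf_le` and `hu_le` are the logarithmic Sobolev inequality with constant
`ρ` for `exp (s * f)` and `exp (s * u)`, the latter when `|∇u|² ≤ 4u`. -/
theorem cgf_half_le_of_herbst {ρ : ℝ} (hρ : 0 < ρ) (hf : integrableExpSet f μ = Set.univ)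
    (hu : integrableExpSet u μ = Set.univ) (hu_nonneg : 0 ≤ᵐ[μ] u)
    (huf : ∀ t, Integrable u (μ.tilted (t * f ·))) (hmean : ∫ ω, f ω ∂μ = 0)
    (hf_le : ∀ t, t * ∫ ω, f ω ∂μ.tilted (t * f ·) - cgf f μ t ≤
      t ^ 2 / (2 * ρ) * ∫ ω, u ω ∂μ.tilted (t * f ·))
    (hu_le : ∀ s, s * ∫ ω, u ω ∂μ.tilted (s * u ·) - cgf u μ s ≤
      2 * s ^ 2 / ρ * ∫ ω, u ω ∂μ.tilted (s * u ·)) :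
    cgf f μ (ρ / 2) ≤ ρ / 2 * ∫ ω, u ω ∂μ := by
  have hcgf_u : cgf u μ (ρ / 4) ≤ ρ / 2 * ∫ ω, u ω ∂μ := by
    have hherbst := mul_inv_sub_le_deriv_zero_of_herbst (c := 2 / ρ) (d := 0) (T := ρ / 4)
      (by positivity) (hasDerivAt_cgf hu) cgf_zero fun s _ => (hu_le s).trans_eq (by ring)
    have hconst : (ρ / 4)⁻¹ - 2 / ρ = 2 / ρ := by field_simp; norm_num
    rw [integral_tilted_zero_mul, hconst, zero_mul, sub_zero, mul_div_assoc',
      div_le_iff₀ hρ] at hherbst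
    linarith
  have hmean_u : ∀ t ∈ Set.Ioc 0 (ρ / 2),
      ∫ ω, u ω ∂μ.tilted (t * f ·) ≤ 4 * ∫ ω, u ω ∂μ := fun t ht => by
    have hduality := mul_integral_tilted_le_entropy_add_cgf hf hu (ρ / 4) t (huf t)
    have hcoeff : t ^ 2 / (2 * ρ) ≤ ρ / 8 := by
      rw [div_le_iff₀ (by positivity)]
      nlinarith [ht.1, ht.2]
    have hbound := mul_le_mul_of_nonneg_right hcoeff <|
      integral_nonneg_of_ae <| (tilted_absolutelyContinuous μ (t * f ·)).ae_le hu_nonneg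
    refine le_of_mul_le_mul_left (a := ρ / 8) ?_ (by positivity)
    linarith [hf_le t]
  have hherbst := mul_inv_sub_le_deriv_zero_of_herbst (c := 0)
    (d := 2 / ρ * ∫ ω, u ω ∂μ) (T := ρ / 2) (by positivity) (hasDerivAt_cgf hf) cgf_zero
    fun t ht => (hf_le t).trans <| (mul_le_mul_of_nonneg_left (hmean_u t ht)
      (by positivity)).trans_eq (by field_simp; ring)
  rw [integral_tilted_zero_mul, hmean, sub_zero, sub_nonpos, ← div_eq_mul_inv,
    div_le_iff₀ (by positivity)] at hherbst
  exact hherbst.trans_eq (by field_simp)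

end Herbst

section SphericalHerbst

open ProbabilityTheory
open scoped Topology

variable {w f u : E n → ℝ} [NeZero n]

lemma integrableExpSet_of_continuousOn_unitSphere (hw : ContinuousOn w (unitSphere n)) :
    integrableExpSet w (sphMeasure n) = Set.univ :=
  Set.eq_univ_of_forall fun t => integrable_of_continuousOn_unitSphere (hw.const_mul t).rexp

lemma integrable_tilted_of_continuousOn_unitSphere (hw : ContinuousOn w (unitSphere n))
    (hf : ContinuousOn f (unitSphere n)) : Integrable w ((sphMeasure n).tilted f) :=
  (integrable_tilted_iff (integrable_of_continuousOn_unitSphere hf.rexp) w).2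
    (integrable_of_continuousOn_unitSphere (hf.rexp.smul hw))

lemma mgf_pos_of_continuousOn_unitSphere (hw : ContinuousOn w (unitSphere n)) (s : ℝ) :
    0 < mgf w (sphMeasure n) s :=
  mgf_pos (integrable_of_continuousOn_unitSphere (hw.const_mul s).rexp)

lemma integral_exp_mul_eq_mgf_mul (hw : ContinuousOn w (unitSphere n)) (s : ℝ) (g : E n → ℝ) :
    ∫ x, Real.exp (s * w x) * g x ∂sphMeasure n =
      mgf w (sphMeasure n) s * ∫ x, g x ∂(sphMeasure n).tilted (s * w ·) := by
  rw [integral_tilted_mul_eq_mgf, ← integral_const_mul]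
  refine integral_congr_ae (.of_forall fun x => ?_)
  have := (mgf_pos_of_continuousOn_unitSphere hw s).ne'
  simp only [smul_eq_mul]
  field_simp

lemma entropy_exp_mul (hw : ContinuousOn w (unitSphere n)) (s : ℝ) :
    entropy (sphMeasure n) (fun x => Real.exp (s * w x)) = mgf w (sphMeasure n) s *
      (s * ∫ x, w x ∂(sphMeasure n).tilted (s * w ·) - cgf w (sphMeasure n) s) := by
  simp only [entropy, Real.log_exp]
  rw [integral_exp_mul_eq_mgf_mul hw, integral_const_mul, ← mgf, ← cgf]
  ring

lemma fisherInformation_exp_mul (hw : ContDiffNearSphere 1 w) (s : ℝ) :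
    fisherInformation (fun x => Real.exp (s * w x)) = mgf w (sphMeasure n) s *
      (s ^ 2 * ∫ x, gradSq w x ∂(sphMeasure n).tilted (s * w ·)) := by
  rw [← integral_const_mul, ← integral_exp_mul_eq_mgf_mul hw.continuousOn, fisherInformation]
  refine integral_congr_of_eqOn_unitSphere fun x hx => ?_
  have hexp : HasDerivAt (fun r => Real.exp (s * r)) (Real.exp (s * w x) * (s * 1)) (w x) :=
    ((hasDerivAt_id' (w x)).const_mul s).exp
  simp only [gradSq_comp hexp (hw.differentiableAt one_ne_zero hx)]
  field_simp

lemma mul_integral_tilted_sub_cgf_le (hn : 3 ≤ n) (hw : ContDiffNearSphere 1 w)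
    (hu : ContinuousOn u (unitSphere n)) {C : ℝ} (hle : ∀ x ∈ unitSphere n, gradSq w x ≤ C * u x)
    (s : ℝ) :
    s * ∫ x, w x ∂(sphMeasure n).tilted (s * w ·) - cgf w (sphMeasure n) s ≤
      s ^ 2 / (2 * (n - 1)) * (C * ∫ x, u x ∂(sphMeasure n).tilted (s * w ·)) := by
  have hn' : (0 : ℝ) < n - 1 := by
    have : (3 : ℝ) ≤ n := by exact_mod_cast hn
    linarith
  have hw_cont := hw.continuousOn
  have hexp : ContDiffNearSphere 1 fun x => Real.exp (s * w x) := fun x hx =>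
    (contDiffAt_const.mul (hw x hx)).exp
  have hlsi := entropy_le_fisherInformation hn hexp fun x _ => Real.exp_pos _
  rw [entropy_exp_mul hw_cont, fisherInformation_exp_mul hw, mul_left_comm] at hlsi
  refine (le_of_mul_le_mul_left hlsi (mgf_pos_of_continuousOn_unitSphere hw_cont s)).trans ?_
  rw [← mul_assoc, one_div_mul_eq_div, ← integral_const_mul C]
  refine mul_le_mul_of_nonneg_left (integral_mono_ae
    (integrable_tilted_of_continuousOn_unitSphere hw.continuousOn_gradSq (hw_cont.const_mul s))
    ((integrable_tilted_of_continuousOn_unitSphere hu (hw_cont.const_mul s)).const_mul C)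
    ((tilted_absolutelyContinuous _ _).ae_le (ae_mem_unitSphere.mono hle))) (by positivity)

theorem cgf_half_le_of_gradSq_le (hn : 3 ≤ n) (hf : ContDiffNearSphere 1 f)
    (hu : ContDiffNearSphere 1 u) (hfu : ∀ x ∈ unitSphere n, gradSq f x ≤ u x)
    (huu : ∀ x ∈ unitSphere n, gradSq u x ≤ 4 * u x) (hmean : ∫ x, f x ∂sphMeasure n = 0) :
    cgf f (sphMeasure n) ((n - 1) / 2) ≤ ((n : ℝ) - 1) / 2 * ∫ x, u x ∂sphMeasure n := by
  have hn' : (0 : ℝ) < n - 1 := by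
    have : (3 : ℝ) ≤ n := by exact_mod_cast hn
    linarith
  refine cgf_half_le_of_herbst hn' (integrableExpSet_of_continuousOn_unitSphere hf.continuousOn)
    (integrableExpSet_of_continuousOn_unitSphere hu.continuousOn)
    (ae_mem_unitSphere.mono fun x hx => (gradSq_nonneg f x).trans (hfu x hx))
    (fun t => integrable_tilted_of_continuousOn_unitSphere hu.continuousOn
      (hf.continuousOn.const_mul t)) hmean (fun t => ?_) fun s => ?_
  · simpa only [one_mul] using
      mul_integral_tilted_sub_cgf_le hn hf hu.continuousOn (C := 1) (by simpa using hfu) t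
  · exact (mul_integral_tilted_sub_cgf_le hn hu hu.continuousOn huu s).trans_eq
      (by field_simp; ring)

end SphericalHerbst

section Gradient

variable {f : E n → ℝ} {x : E n}

lemma norm_gradient_eq_norm_fderiv (f : E n → ℝ) (x : E n) : ‖gradient f x‖ = ‖fderiv ℝ f x‖ :=
  LinearIsometryEquiv.norm_map _ _

lemma ContDiffNearSphere.continuousOn_norm_gradient (hf : ContDiffNearSphere 1 f) :
    ContinuousOn (fun x => ‖gradient f x‖) (unitSphere n) := by
  simpa only [norm_gradient_eq_norm_fderiv] using hf.continuousOn_fderiv.norm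

lemma tangentDeriv_eq_sgrad_apply (i : Fin n) (f : E n → ℝ) (x : E n) :
    tangentDeriv i f x = sgrad f x i := by
  rw [tangentDeriv, ← inner_gradient_left, tangentVec, inner_sub_right, inner_smul_right,
    EuclideanSpace.inner_single_right]
  simp [sgrad, mul_comm]

lemma gradSq_eq_norm_sgrad_sq (f : E n → ℝ) (x : E n) : gradSq f x = ‖sgrad f x‖ ^ 2 := by
  simp only [gradSq, tangentDeriv_eq_sgrad_apply, EuclideanSpace.real_norm_sq_eq]

lemma gradSq_le_norm_gradient_sq (hx : x ∈ unitSphere n) (f : E n → ℝ) :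
    gradSq f x ≤ ‖gradient f x‖ ^ 2 := by
  have hpyth : ‖sgrad f x‖ ^ 2 = ‖gradient f x‖ ^ 2 - ⟪gradient f x, x⟫ ^ 2 := by
    rw [sgrad, norm_sub_sq_real, inner_smul_right, norm_smul, mem_sphere_zero_iff_norm.1 hx,
      mul_one, Real.norm_eq_abs, sq_abs]
    ring
  rw [gradSq_eq_norm_sgrad_sq, hpyth]
  exact sub_le_self _ (sq_nonneg _)

lemma contDiffAt_gradient (hf : ContDiffAt ℝ 2 f x) : ContDiffAt ℝ 1 (gradient f) x :=
  (InnerProductSpace.toDual ℝ (E n)).symm.contDiff.contDiffAt.comp x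
    (hf.fderiv_right (m := 1) (by norm_num))

lemma norm_fderiv_norm_gradient_sq_le (hf : ContDiffAt ℝ 2 f x) (hop : ‖hess f x‖ ≤ 1) :
    ‖fderiv ℝ (fun y => ‖gradient f y‖ ^ 2) x‖ ≤ 2 * ‖gradient f x‖ := by
  have hd : HasFDerivAt (gradient f) (hess f x) x :=
    ((contDiffAt_gradient hf).differentiableAt one_ne_zero).hasFDerivAt
  rw [hd.norm_sq.fderiv]
  refine ContinuousLinearMap.opNorm_le_bound _ (by positivity) fun v => ?_
  have hinner : |⟪gradient f x, hess f x v⟫| ≤ ‖gradient f x‖ * ‖v‖ :=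
    (abs_real_inner_le_norm _ _).trans
      (mul_le_mul_of_nonneg_left (by simpa using (hess f x).le_of_opNorm_le hop v) (norm_nonneg _))
  simpa [abs_mul, mul_assoc] using hinner

lemma gradSq_norm_gradient_sq_le (hx : x ∈ unitSphere n) (hf : ContDiffAt ℝ 2 f x)
    (hop : ‖hess f x‖ ≤ 1) :
    gradSq (fun y => ‖gradient f y‖ ^ 2) x ≤ 4 * ‖gradient f x‖ ^ 2 :=
  calc gradSq (fun y => ‖gradient f y‖ ^ 2) x
      ≤ ‖gradient (fun y => ‖gradient f y‖ ^ 2) x‖ ^ 2 := gradSq_le_norm_gradient_sq hx _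
    _ ≤ (2 * ‖gradient f x‖) ^ 2 := by
        rw [norm_gradient_eq_norm_fderiv]
        gcongr
        exact norm_fderiv_norm_gradient_sq_le hf hop
    _ = 4 * ‖gradient f x‖ ^ 2 := by ring

end Gradient

section Circle

variable {w f : E 2 → ℝ} {x y : E 2}

lemma rotate_two_apply_zero (s : ℝ) (x : E 2) :
    rotate 0 1 s x 0 = Real.cos s * x 0 - Real.sin s * x 1 := by
  simp [rotate]
  ring

lemma rotate_two_apply_one (s : ℝ) (x : E 2) :
    rotate 0 1 s x 1 = Real.cos s * x 1 + Real.sin s * x 0 := by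
  simp [rotate]
  ring

lemma rotate_two_rotate_two (s t : ℝ) (x : E 2) :
    rotate 0 1 s (rotate 0 1 t x) = rotate 0 1 (s + t) x := by
  ext k
  fin_cases k
  · simp only [Fin.mk_zero, rotate_two_apply_zero, rotate_two_apply_one, Real.cos_add,
      Real.sin_add]
    ring
  · simp only [Fin.mk_one, rotate_two_apply_zero, rotate_two_apply_one, Real.cos_add, Real.sin_add]
    ring

lemma periodic_rotate (i j : Fin n) (x : E n) :
    Function.Periodic (fun s => rotate i j s x) (2 * Real.pi) := fun s => by
  simp only [rotate, Real.cos_add_two_pi, Real.sin_add_two_pi]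

lemma exists_cos_eq_sin_eq {c s : ℝ} (h : c ^ 2 + s ^ 2 = 1) :
    ∃ θ ∈ Set.Icc 0 (2 * Real.pi), Real.cos θ = c ∧ Real.sin θ = s := by
  have hcos : Real.cos (Real.arccos c) = c := Real.cos_arccos (by nlinarith) (by nlinarith)
  have hsin : Real.sin (Real.arccos c) = |s| := by
    rw [Real.sin_arccos, ← Real.sqrt_sq_eq_abs, eq_sub_of_add_eq' h]
  have harccos_nonneg := Real.arccos_nonneg c
  have harccos_le := Real.arccos_le_pi c
  rcases le_total 0 s with hs | hs
  · exact ⟨Real.arccos c, ⟨harccos_nonneg, by linarith⟩, hcos, by rw [hsin, abs_of_nonneg hs]⟩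
  · refine ⟨2 * Real.pi - Real.arccos c, ⟨by linarith, by linarith⟩, ?_, ?_⟩
    · rw [Real.cos_two_pi_sub, hcos]
    · rw [Real.sin_two_pi_sub, hsin, abs_of_nonpos hs, neg_neg]

lemma exists_rotate_two_eq (hx : x ∈ unitSphere 2) (hy : y ∈ unitSphere 2) :
    ∃ θ ∈ Set.Icc 0 (2 * Real.pi), rotate 0 1 θ x = y := by
  have hx1 := sum_sq_eq_one hx
  have hy1 := sum_sq_eq_one hy
  rw [Fin.sum_univ_two] at hx1 hy1
  obtain ⟨θ, hθ, hcos, hsin⟩ := exists_cos_eq_sin_eq (c := x 0 * y 0 + x 1 * y 1)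
    (s := x 0 * y 1 - x 1 * y 0) (by linear_combination (y 0 ^ 2 + y 1 ^ 2) * hx1 + hy1)
  refine ⟨θ, hθ, ?_⟩
  ext k
  fin_cases k
  · simp only [Fin.zero_eta, rotate_two_apply_zero, hcos, hsin]
    linear_combination y 0 * hx1
  · simp only [Fin.mk_one, rotate_two_apply_one, hcos, hsin]
    linear_combination y 1 * hx1

lemma continuous_comp_rotate {w : E n → ℝ} {x : E n} {i j : Fin n} (hij : i ≠ j)
    (hw : ContinuousOn w (unitSphere n)) (hx : x ∈ unitSphere n) :
    Continuous fun s => w (rotate i j s x) :=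
  hw.comp_continuous
    (continuous_iff_continuousAt.2 fun s => (hasDerivAt_rotate hij s x).continuousAt)
    fun s => rotate_mem_unitSphere hij s hx

lemma integrable_comp_rotate {w : E n → ℝ} {i j : Fin n} [NeZero n] (hij : i ≠ j)
    (hw : ContinuousOn w (unitSphere n)) (a b : ℝ) :
    Integrable (Function.uncurry fun (x : E n) s => w (rotate i j s x))
      ((sphMeasure n).prod (volume.restrict (Set.Ioc a b))) := by
  have hcont : ContinuousOn (Function.uncurry fun (x : E n) s => w (rotate i j s x))
      (unitSphere n ×ˢ Set.Icc a b) :=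
    hw.comp (f := fun q : E n × ℝ => rotate i j q.2 q.1) (by unfold rotate; fun_prop)
      fun q hq => rotate_mem_unitSphere hij q.2 hq.1
  have hint := (hcont.integrableOn_compact (μ := (sphMeasure n).prod volume)
    ((isCompact_sphere 0 1).prod isCompact_Icc)).mono_set
      (Set.prod_mono le_rfl Set.Ioc_subset_Icc_self)
  rwa [IntegrableOn, ← Measure.prod_restrict,
    Measure.restrict_eq_self_of_ae_mem ae_mem_unitSphere] at hint

lemma intervalIntegral_comp_rotate_two_eq (hx : x ∈ unitSphere 2) (hy : y ∈ unitSphere 2)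
    (w : E 2 → ℝ) :
    ∫ s in (0)..(2 * Real.pi), w (rotate 0 1 s y) =
      ∫ s in (0)..(2 * Real.pi), w (rotate 0 1 s x) := by
  obtain ⟨θ, -, rfl⟩ := exists_rotate_two_eq hx hy
  simp only [rotate_two_rotate_two]
  rw [intervalIntegral.integral_comp_add_right fun s => w (rotate 0 1 s x), zero_add, add_comm _ θ]
  simpa using ((periodic_rotate 0 1 x).comp w).intervalIntegral_add_eq θ 0

lemma intervalIntegral_comp_rotate_two (hw : ContinuousOn w (unitSphere 2))
    (hx : x ∈ unitSphere 2) :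
    ∫ s in (0)..(2 * Real.pi), w (rotate 0 1 s x) = 2 * Real.pi * ∫ y, w y ∂sphMeasure 2 := by
  have hswap := integral_integral_swap
    (integrable_comp_rotate (i := 0) (j := 1) zero_ne_one hw 0 (2 * Real.pi))
  simp only [← intervalIntegral.integral_of_le Real.two_pi_pos.le] at hswap
  rw [integral_congr_of_eqOn_unitSphere
    fun y hy => intervalIntegral_comp_rotate_two_eq hx hy w] at hswap
  have hrot (s : ℝ) : ∫ y, w (rotate 0 1 s y) ∂sphMeasure 2 = ∫ y, w y ∂sphMeasure 2 :=
    integral_comp_linearIsometryEquiv (rotateIsometry zero_ne_one s) w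
  simpa [hrot] using hswap

lemma norm_rotationDeriv_le_norm_gradient (hx : x ∈ unitSphere 2) (f : E 2 → ℝ) :
    ‖rotationDeriv 0 1 f x‖ ≤ ‖gradient f x‖ := by
  have hnorm : ‖rotationField 0 1 x‖ = 1 := by
    rw [EuclideanSpace.norm_eq, Real.sqrt_eq_one, ← sum_sq_eq_one hx, Fin.sum_univ_two,
      Fin.sum_univ_two]
    simp [rotationField, add_comm]
  rw [norm_gradient_eq_norm_fderiv]
  simpa [hnorm, rotationDeriv] using (fderiv ℝ f x).le_opNorm (rotationField 0 1 x)

lemma abs_comp_rotate_sub_le (hf : ContDiffNearSphere 1 f) (hx : x ∈ unitSphere 2) {a b : ℝ}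
    (hab : a ≤ b) :
    |f (rotate 0 1 b x) - f (rotate 0 1 a x)| ≤ ∫ s in a..b, ‖gradient f (rotate 0 1 s x)‖ := by
  have hmem (s : ℝ) := rotate_mem_unitSphere (i := 0) (j := 1) zero_ne_one s hx
  have hftc := intervalIntegral.integral_eq_sub_of_hasDerivAt (fun s _ =>
    hasDerivAt_comp_rotate zero_ne_one (hf.differentiableAt one_ne_zero (hmem s)))
    ((continuous_comp_rotate zero_ne_one (hf.continuousOn_rotationDeriv 0 1)
      hx).intervalIntegrable a b)
  rw [← hftc]
  exact intervalIntegral.norm_integral_le_of_norm_le hab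
    (ae_of_all _ fun s _ => norm_rotationDeriv_le_norm_gradient (hmem s) f)
    ((continuous_comp_rotate zero_ne_one hf.continuousOn_norm_gradient hx).intervalIntegrable a b)

lemma sub_le_pi_mul_integral_norm_gradient (hf : ContDiffNearSphere 1 f) (hx : x ∈ unitSphere 2)
    (hy : y ∈ unitSphere 2) :
    f y - f x ≤ Real.pi * ∫ z, ‖gradient f z‖ ∂sphMeasure 2 := by
  -- Average the estimates along the two arcs from `x` to `y`, which together cover the circle.
  obtain ⟨θ, ⟨hθ, hθ'⟩, rfl⟩ := exists_rotate_two_eq hx hy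
  have hcont := continuous_comp_rotate (i := 0) (j := 1) zero_ne_one
    hf.continuousOn_norm_gradient hx
  have hfirst := (abs_le.1 (abs_comp_rotate_sub_le hf hx hθ)).2
  have hsecond := (abs_le.1 (abs_comp_rotate_sub_le hf hx hθ')).1
  have htotal := intervalIntegral.integral_add_adjacent_intervals (μ := volume)
    (hcont.intervalIntegrable 0 θ) (hcont.intervalIntegrable θ (2 * Real.pi))
  rw [intervalIntegral_comp_rotate_two hf.continuousOn_norm_gradient hx] at htotal
  rw [(periodic_rotate 0 1 x).eq] at hsecond
  rw [rotate_zero] at hfirst hsecond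
  linarith

lemma exists_forall_mem_Icc_of_contDiffNearSphere (hf : ContDiffNearSphere 1 f) :
    ∃ a b, a ≤ b ∧ b - a ≤ Real.pi * ∫ x, ‖gradient f x‖ ∂sphMeasure 2 ∧
      ∀ x ∈ unitSphere 2, f x ∈ Set.Icc a b := by
  have hne : (unitSphere 2).Nonempty := NormedSpace.sphere_nonempty.2 zero_le_one
  obtain ⟨x, hx, hmin⟩ := (isCompact_sphere 0 1).exists_isMinOn hne hf.continuousOn
  obtain ⟨y, hy, hmax⟩ := (isCompact_sphere 0 1).exists_isMaxOn hne hf.continuousOn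
  exact ⟨f x, f y, hmin hy, sub_le_pi_mul_integral_norm_gradient hf hx hy,
    fun z hz => ⟨hmin hz, hmax hz⟩⟩

open ProbabilityTheory in
theorem cgf_half_le_circle (hf : ContDiffNearSphere 1 f) (hmean : ∫ x, f x ∂sphMeasure 2 = 0) :
    cgf f (sphMeasure 2) (1 / 2) ≤ 1 / 2 * ∫ x, ‖gradient f x‖ ^ 2 ∂sphMeasure 2 := by
  obtain ⟨a, b, hab, hosc, hmem⟩ := exists_forall_mem_Icc_of_contDiffNearSphere hf
  have hgrad := hf.continuousOn_norm_gradient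
  have hjensen : (∫ x, ‖gradient f x‖ ∂sphMeasure 2) ^ 2 ≤
      ∫ x, ‖gradient f x‖ ^ 2 ∂sphMeasure 2 :=
    (even_two.convexOn_pow (𝕜 := ℝ)).map_integral_le (continuous_pow 2).continuousOn isClosed_univ
      (ae_of_all _ fun _ => Set.mem_univ _) (integrable_of_continuousOn_unitSphere hgrad)
      (integrable_of_continuousOn_unitSphere (hgrad.pow 2))
  have hhoeffding := (hasSubgaussianMGF_of_mem_Icc_of_integral_eq_zero
    (integrable_of_continuousOn_unitSphere hf.continuousOn).aemeasurable
    (ae_mem_unitSphere.mono hmem) hmean).cgf_le (1 / 2)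
  set m := ∫ x, ‖gradient f x‖ ∂sphMeasure 2
  have hpi : Real.pi ^ 2 ≤ 16 := by nlinarith [Real.pi_le_four, Real.pi_pos]
  calc cgf f (sphMeasure 2) (1 / 2)
      ≤ ((b - a) / 2) ^ 2 * (1 / 2) ^ 2 / 2 := by
        simpa [abs_of_nonneg (sub_nonneg.2 hab)] using hhoeffding
    _ ≤ (Real.pi * m / 2) ^ 2 * (1 / 2) ^ 2 / 2 := by
        have := sub_nonneg.2 hab
        gcongr
    _ = Real.pi ^ 2 / 32 * m ^ 2 := by ring
    _ ≤ 1 / 2 * m ^ 2 := mul_le_mul_of_nonneg_right (by linarith) (sq_nonneg m)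
    _ ≤ _ := by gcongr

end Circle

/-- **Corollary 3.2, (3.3) (Statement 7).** Sharpened exponential bound on the sphere
via the Euclidean Hessian and gradient. -/
theorem log_exp_bound_euclidean_hessian
    {n : ℕ} (hn : 2 ≤ n) (f : E n → ℝ) (U : Set (E n)) (hU : IsOpen U)
    (hUS : Metric.sphere (0 : E n) 1 ⊆ U) (hf : ContDiffOn ℝ 2 f U)
    (hmean : ∫ θ, f θ ∂sphMeasure n = 0)
    (hop : ∀ θ ∈ Metric.sphere (0 : E n) 1, ‖hess f θ‖ ≤ 1) :
    Real.log (∫ θ, Real.exp (((n : ℝ) - 1) / 2 * f θ) ∂sphMeasure n) ≤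
      ((n : ℝ) - 1) / 2 * ∫ θ, ‖gradient f θ‖ ^ 2 ∂sphMeasure n := by
  have hf2 (x) (hx : x ∈ unitSphere n) : ContDiffAt ℝ 2 f x := hf.contDiffAt (hU.mem_nhds (hUS hx))
  have hf1 : ContDiffNearSphere 1 f := fun x hx => (hf2 x hx).of_le one_le_two
  rcases hn.eq_or_lt with rfl | hn3
  · have hone : ((2 : ℕ) : ℝ) - 1 = 1 := by norm_num
    rw [hone]
    exact cgf_half_le_circle hf1 hmean
  · have : NeZero n := ⟨by lia⟩
    exact cgf_half_le_of_gradSq_le hn3 hf1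
      (fun x hx => (contDiffAt_gradient (hf2 x hx)).norm_sq ℝ)
      (fun x hx => gradSq_le_norm_gradient_sq hx f)
      (fun x hx => gradSq_norm_gradient_sq_le hx (hf2 x hx) (hop x hx)) hmean

end SecondOrderConc
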